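/- arXiv:1207.4331 — 6 statements merged into one kernel-verified Lean document; each statement's English description precedes it below -/
import Mathlib

section
/- Let (a_n)_{n\ge 0} be a sequence of real numbers. For n \ge 1 define the polynomial p_n(x) as the determinant of the (n+1)\times(n+1) matrix whose (i,j)-entry is a_{i+j-2} for 1 \le j \le n and whose last column is (1, x, x^2, \dots, x^n)^T (i.e. the (i,n+1)-entry is x^{i-1}), and set p_0 = 1. Define q_n(x) = \sum_{j=0}^n a_j \binom{n}{j} (-x)^{n-j}. Then for all integers n, m \ge 1 and all real x: det( p_{m+j-1}^{(i-1)}(x) )_{i,j=1}^n = (-1)^{nm} \left( \prod_{k=1}^{n-1} k! \cdot \det( a_{i+j-2} )_{i,j=1}^{k+m} \right) \cdot \det( q_{n+i+j-2}(x) )_{i,j=1}^m, where p^{(i-1)} denotes the (i-1)-st derivative, and an empty product equals 1 and a 0\times 0 determinant equals 1. -/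
open Matrix Polynomial in
/-- Hankel matrix -/
def hk {R : Type*} (b : ℕ → R) (k : ℕ) : Matrix (Fin k) (Fin k) R :=
  Matrix.of fun i j => b ((i : ℕ) + (j : ℕ))

/-- cofactor -/
noncomputable def cf {R : Type*} [CommRing R] (b : ℕ → R) (i k : ℕ) : R :=
  Matrix.cramer (hk b (k + 1)) (fun r => if (r : ℕ) = i then 1 else 0) (Fin.last k)

theorem cramer_expand {R : Type*} [CommRing R] (b : ℕ → R) (k N : ℕ) (hk' : k < N) (v : ℕ → R) :
    Matrix.cramer (hk b (k + 1)) (fun r => v r) (Fin.last k)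
      = ∑ r : Fin N, v r * cf b r k := by
  have h : (fun r : Fin (k + 1) => v r)
      = ∑ r : Fin N, v r • (fun t : Fin (k + 1) => if (t : ℕ) = (r : ℕ) then (1 : R) else 0) := by
    ext t
    have ht : (t : ℕ) < N := by omega
    rw [Finset.sum_apply, Finset.sum_eq_single (⟨t, ht⟩ : Fin N)]
    · simp
    · intro r _ hr
      have : (t : ℕ) ≠ (r : ℕ) := fun h => hr (Fin.ext h.symm)
      simp [this]
    · simp
  rw [h, map_sum, Finset.sum_apply]
  simp [cf, map_smul]

theorem bc_zero {R : Type*} [CommRing R] (b : ℕ → R) (k N s : ℕ) (hk' : k < N) (hs : s < k) :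
    ∑ r : Fin N, b (s + r) * cf b r k = 0 := by
  rw [← cramer_expand b k N hk' (fun r => b (s + r))]
  rw [Matrix.cramer_row_self _ _ (⟨s, by omega⟩ : Fin (k + 1))]
  · rw [Pi.single_eq_of_ne]
    intro h
    have := congrArg Fin.val h
    simp at this
    omega
  · intro j
    simp [hk, add_comm]

theorem bc_diag {R : Type*} [CommRing R] (b : ℕ → R) (k N : ℕ) (hk' : k < N) :
    ∑ r : Fin N, b (k + r) * cf b r k = (hk b (k + 1)).det := by
  rw [← cramer_expand b k N hk' (fun r => b (k + r))]
  rw [Matrix.cramer_row_self _ _ (Fin.last k)]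
  · simp
  · intro j
    simp [hk, add_comm]

theorem rot_pow (N m : ℕ) (i : Fin N) : (((finRotate N) ^ m) i : ℕ) = ((i : ℕ) + m) % N := by
  induction m with
  | zero => simp [Nat.mod_eq_of_lt i.2]
  | succ m ih =>
    rw [pow_succ', Equiv.Perm.mul_apply]
    cases N with
    | zero => exact i.elim0
    | succ N =>
      rw [finRotate_apply, Fin.val_add, ih]
      have h1 : ((1 : Fin (N + 1)) : ℕ) = 1 % (N + 1) := by simp
      rw [h1, ← Nat.add_mod, add_assoc]

theorem sign_rot {R : Type*} [CommRing R] (n m : ℕ) (hn : 1 ≤ n) :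
    ((Equiv.Perm.sign ((finRotate (n + m)) ^ m) : ℤˣ) : R) = (-1) ^ (n * m) := by
  rw [map_pow, sign_finRotate]
  push_cast
  rw [← pow_mul]
  apply neg_one_pow_congr
  obtain ⟨n, rfl⟩ : ∃ k, n = k + 1 := ⟨n - 1, by omega⟩
  have : n + 1 + m - 1 = n + m := by omega
  rw [this]
  simp only [Nat.even_mul, Nat.even_add, Nat.even_add_one]
  tauto

theorem core {R : Type*} [CommRing R] (b : ℕ → R) (n m : ℕ) (hn : 1 ≤ n) :
    (hk b (n + m)).det * (Matrix.of fun i j : Fin n => cf b i (m + j)).det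
      = (-1) ^ (n * m) * (∏ j : Fin n, (hk b (m + j + 1)).det) *
        (Matrix.of fun i j : Fin m => b (n + i + j)).det := by
  let e : Fin n ⊕ Fin m ≃ Fin (n + m) := finSumFinEquiv
  let ρ := (finRotate (n + m)) ^ m
  let B : Matrix (Fin n ⊕ Fin m) (Fin n ⊕ Fin m) R :=
    ((hk b (n + m)).submatrix ρ id).submatrix e e
  have hB : B.det = (-1) ^ (n * m) * (hk b (n + m)).det := by
    simp only [B]
    rw [Matrix.det_submatrix_equiv_self, Matrix.det_permute, sign_rot n m hn]
  let W : Matrix (Fin n) (Fin n) R := Matrix.of fun i j : Fin n => cf b i (m + j)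
  let V : Matrix (Fin m) (Fin n) R := Matrix.of fun i j => cf b (n + i) (m + j)
  let M : Matrix (Fin n ⊕ Fin m) (Fin n ⊕ Fin m) R := Matrix.fromBlocks W 0 V 1
  have hM : M.det = W.det := by
    simp only [M]
    rw [Matrix.det_fromBlocks_zero₁₂]; simp
  let L : Matrix (Fin n) (Fin n) R := Matrix.of fun i j : Fin n =>
    ∑ r : Fin (n + m), b (m + i + r) * cf b r (m + j)
  let D : Matrix (Fin m) (Fin m) R := Matrix.of fun i j : Fin m => b (n + i + j)
  let Y : Matrix (Fin n) (Fin m) R := Matrix.of fun i j => b (m + i + (n + j))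
  have hρl : ∀ i : Fin n, (ρ (e (Sum.inl i)) : ℕ) = m + i := by
    intro i
    simp only [ρ, e]
    rw [rot_pow]
    simp only [finSumFinEquiv_apply_left, Fin.val_castAdd]
    rw [Nat.mod_eq_of_lt (by omega)]
    omega
  have hρr : ∀ i : Fin m, (ρ (e (Sum.inr i)) : ℕ) = i := by
    intro i
    simp only [ρ, e]
    rw [rot_pow]
    simp only [finSumFinEquiv_apply_right, Fin.val_natAdd]
    rw [show n + (i : ℕ) + m = i + (n + m) by omega, Nat.add_mod_right,
      Nat.mod_eq_of_lt (by omega)]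
  have hcol : ∀ (s : ℕ) (j : Fin n),
      ∑ r : Fin (n + m), b (s + r) * cf b r (m + j)
      = ∑ y : Fin n, b (s + y) * cf b y (m + j) + ∑ y : Fin m, b (s + (n + y)) * cf b (n + y) (m + j) := by
    intro s j
    rw [Fin.sum_univ_add]
    simp
  have hBM : B * M = Matrix.fromBlocks L Y 0 D := by
    ext x y
    rw [Matrix.mul_apply, Fintype.sum_sum_type]
    rcases x with i | i <;> rcases y with j | j
    · simp only [B, M, L, hk, W, V, Matrix.submatrix_apply, Matrix.of_apply, id,
        Matrix.fromBlocks_apply₁₁, Matrix.fromBlocks_apply₂₁, hρl, hcol]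
      simp [e]
    · simp only [B, M, Y, hk, Matrix.submatrix_apply, Matrix.of_apply, id,
        Matrix.fromBlocks_apply₁₂, Matrix.fromBlocks_apply₂₂, hρl]
      simp [e, Matrix.one_apply]
    · simp only [B, M, hk, W, V, Matrix.submatrix_apply, Matrix.of_apply, id,
        Matrix.fromBlocks_apply₁₁, Matrix.fromBlocks_apply₂₁, hρr]
      have h := bc_zero b (m + j) (n + m) i (by omega) (by omega)
      rw [hcol] at h
      simpa [e] using h
    · simp only [B, M, D, hk, Matrix.submatrix_apply, Matrix.of_apply, id,
        Matrix.fromBlocks_apply₁₂, Matrix.fromBlocks_apply₂₂, hρr]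
      simp [e, Matrix.one_apply]
      congr 1
      omega
  have hL : L.det = ∏ j : Fin n, (hk b (m + j + 1)).det := by
    rw [Matrix.det_of_lowerTriangular L]
    · apply Finset.prod_congr rfl
      intro j _
      exact bc_diag b (m + j) (n + m) (by omega)
    · intro i j hij
      have hij' : i < j := by simpa using hij
      exact bc_zero b (m + j) (n + m) (m + i) (by omega) (by omega)
  have hdet := congrArg Matrix.det hBM
  rw [Matrix.det_mul, Matrix.det_fromBlocks_zero₂₁, hB, hM, hL] at hdet
  have hs : ((-1 : R) ^ (n * m)) * (-1) ^ (n * m) = 1 := by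
    rw [← mul_pow]; simp
  change _ * W.det = _ * _ * D.det
  calc (hk b (n + m)).det * W.det
      = ((-1 : R) ^ (n * m)) * (-1) ^ (n * m) * ((hk b (n + m)).det * W.det) := by rw [hs, one_mul]
    _ = (-1 : R) ^ (n * m) * ((-1) ^ (n * m) * (hk b (n + m)).det * W.det) := by ring
    _ = _ := by rw [hdet]; ring

theorem map_hk {R S : Type*} [CommRing R] [CommRing S] (f : R →+* S) (b : ℕ → R) (k : ℕ) :
    (hk b k).map f = hk (fun i => f (b i)) k := by
  ext i j; simp [hk]

theorem map_hk_det {R S : Type*} [CommRing R] [CommRing S] (f : R →+* S) (b : ℕ → R) (k : ℕ) :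
    f (hk b k).det = (hk (fun i => f (b i)) k).det := by
  rw [RingHom.map_det, RingHom.mapMatrix_apply, map_hk]

theorem map_cf {R S : Type*} [CommRing R] [CommRing S] (f : R →+* S) (b : ℕ → R) (i k : ℕ) :
    f (cf b i k) = cf (fun i => f (b i)) i k := by
  unfold cf
  rw [Matrix.cramer_apply, Matrix.cramer_apply, RingHom.map_det, RingHom.mapMatrix_apply,
    Matrix.map_updateCol, map_hk]
  congr 2
  ext r
  simp only [Function.comp]
  split_ifs <;> simp

theorem anti_det (N : ℕ) : (hk (fun j => if j + 1 = N then (1 : ℝ) else 0) N).det ≠ 0 := by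
  have h : hk (fun j => if j + 1 = N then (1 : ℝ) else 0) N
      = (1 : Matrix (Fin N) (Fin N) ℝ).submatrix Fin.revPerm id := by
    ext i j
    simp only [hk, Matrix.of_apply, Matrix.submatrix_apply, Matrix.one_apply, id]
    congr 1
    rw [Fin.ext_iff]
    simp [Fin.val_rev]
    omega
  rw [h, Matrix.det_permute]
  simp

theorem core' (b : ℕ → ℝ) (n m : ℕ) (hn : 1 ≤ n) :
    (Matrix.of fun i j : Fin n => cf b i (m + j)).det
      = (-1) ^ (n * m) * (∏ j : Fin (n - 1), (hk b (m + j + 1)).det) *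
        (Matrix.of fun i j : Fin m => b (n + i + j)).det := by
  obtain ⟨n, rfl⟩ : ∃ k, n = k + 1 := ⟨n - 1, by omega⟩
  let c : ℕ → ℝ := fun j => if j + 1 = n + 1 + m then (1 : ℝ) else 0
  let bt : ℕ → Polynomial ℝ := fun j => Polynomial.X * Polynomial.C (c j) + Polynomial.C (b j)
  have hne : (hk bt (n + 1 + m)).det ≠ 0 := by
    have h := Polynomial.coeff_det_X_add_C_card (hk c (n + 1 + m)) (hk b (n + 1 + m))
    have h2 : (Polynomial.X : Polynomial ℝ) • (hk c (n + 1 + m)).map Polynomial.C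
        + (hk b (n + 1 + m)).map Polynomial.C = hk bt (n + 1 + m) := by
      ext1 i j
      simp [hk, bt]
    rw [h2] at h
    intro h0
    rw [h0] at h
    exact anti_det (n + 1 + m) (by simpa using h.symm)
  have h := core bt (n + 1) m hn
  rw [Fin.prod_univ_castSucc] at h
  have h3 : (Matrix.of fun i j : Fin (n + 1) => cf bt i (m + j)).det
      = (-1) ^ ((n + 1) * m) * (∏ j : Fin n, (hk bt (m + j + 1)).det) *
        (Matrix.of fun i j : Fin m => bt (n + 1 + i + j)).det := by
    apply mul_left_cancel₀ hne
    rw [h]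
    have : m + ((Fin.last n : Fin (n + 1)) : ℕ) + 1 = n + 1 + m := by simp; omega
    rw [this]
    simp only [Fin.val_castSucc]
    ring
  have h4 := congrArg (Polynomial.evalRingHom (0 : ℝ)) h3
  have hb : (fun i => Polynomial.evalRingHom (0 : ℝ) (bt i)) = b := by
    ext i; simp [bt]
  rw [map_mul, map_mul, map_pow, map_prod, RingHom.map_det, RingHom.map_det] at h4
  simp only [map_hk_det, hb] at h4
  have e1 : (Polynomial.evalRingHom (0 : ℝ)).mapMatrix (Matrix.of fun i j : Fin (n + 1) => cf bt i (m + j))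
      = Matrix.of fun i j : Fin (n + 1) => cf b i (m + j) := by
    ext i j
    rw [RingHom.mapMatrix_apply, Matrix.map_apply, Matrix.of_apply, Matrix.of_apply, map_cf, hb]
  have e2 : (Polynomial.evalRingHom (0 : ℝ)).mapMatrix (Matrix.of fun i j : Fin m => bt (n + 1 + i + j))
      = Matrix.of fun i j : Fin m => b (n + 1 + i + j) := by
    ext i j
    rw [RingHom.mapMatrix_apply, Matrix.map_apply, Matrix.of_apply, Matrix.of_apply]
    exact congrFun hb _
  rw [e1, e2] at h4
  simpa using h4

/-- translation matrix -/
noncomputable def tm (x : ℝ) (k : ℕ) : Matrix (Fin k) (Fin k) ℝ :=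
  Matrix.of fun r s => (-x) ^ ((r : ℕ) - (s : ℕ)) * ((r : ℕ).choose s : ℝ)

theorem tm_det (x : ℝ) (k : ℕ) : (tm x k).det = 1 := by
  rw [Matrix.det_of_lowerTriangular]
  · simp [tm]
  · intro i j hij
    have hij' : i < j := by simpa using hij
    simp [tm, Nat.choose_eq_zero_of_lt (Fin.lt_def.1 hij')]

/-- binomial sums over Fin -/
theorem binom_fin {A : Type*} [CommRing A] [Algebra ℝ A] (x : ℝ) (z : A) (k r : ℕ) (hr : r < k) :
    ∑ s : Fin k, ((-x) ^ (r - (s : ℕ)) * (r.choose s : ℝ)) • z ^ (s : ℕ)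
      = (z - algebraMap ℝ A x) ^ r := by
  rw [Fin.sum_univ_eq_sum_range (fun s => ((-x) ^ (r - s) * (r.choose s : ℝ)) • z ^ s) k]
  rw [sub_eq_add_neg, add_pow]
  symm
  rw [← Finset.sum_subset (Finset.range_subset_range.2 (show r + 1 ≤ k from hr))]
  · apply Finset.sum_congr rfl
    intro s _
    rw [Algebra.smul_def]
    simp
    ring
  · intro s _ hs
    have : r < s := by simpa using hs
    simp [Nat.choose_eq_zero_of_lt this]

theorem tm_conj (a : ℕ → ℝ) (q : ℕ → ℝ) (x : ℝ)
    (hq : ∀ n : ℕ, q n = ∑ j ∈ Finset.range (n + 1), a j * (n.choose j : ℝ) * (-x) ^ (n - j))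
    (k : ℕ) : tm x k * hk a k * (tm x k).transpose = hk q k := by
  let Λ : Polynomial ℝ →ₗ[ℝ] ℝ := (Polynomial.basisMonomials ℝ).constr ℝ a
  have hΛ : ∀ j, Λ (Polynomial.X ^ j) = a j := by
    intro j
    have := (Polynomial.basisMonomials ℝ).constr_basis ℝ a j
    rw [Polynomial.coe_basisMonomials] at this
    dsimp only at this
    rwa [← Polynomial.X_pow_eq_monomial] at this
  have hqΛ : ∀ n, q n = Λ ((Polynomial.X - algebraMap ℝ (Polynomial ℝ) x) ^ n) := by
    intro n
    rw [← binom_fin x Polynomial.X (n + 1) n (by omega), map_sum, hq,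
      Finset.sum_range]
    apply Finset.sum_congr rfl
    intro s _
    rw [map_smul, hΛ, smul_eq_mul]
    ring
  ext i j
  simp only [hk, Matrix.of_apply]
  rw [hqΛ, pow_add, ← binom_fin x Polynomial.X k i i.2, ← binom_fin x Polynomial.X k j j.2,
    Finset.sum_mul_sum, Finset.sum_comm, map_sum, Matrix.mul_apply]
  apply Finset.sum_congr rfl
  intro s _
  rw [Matrix.mul_apply, map_sum, Finset.sum_mul]
  apply Finset.sum_congr rfl
  intro t _
  rw [smul_mul_smul_comm, ← pow_add, map_smul, hΛ]
  simp [tm]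
  ring

theorem tm_vec (x : ℝ) (k i : ℕ) :
    (tm x k).mulVec (fun s => x ^ ((s : ℕ) - i) * ((s : ℕ).choose i : ℝ))
      = fun r : Fin k => if (r : ℕ) = i then (1 : ℝ) else 0 := by
  ext r
  have h := congrArg (fun P : Polynomial ℝ => P.coeff i)
    (binom_fin x (Polynomial.X + Polynomial.C x) k r r.2)
  simp only [Polynomial.finset_sum_coeff, Polynomial.coeff_smul, Polynomial.coeff_X_add_C_pow] at h
  rw [Polynomial.algebraMap_eq, add_sub_cancel_right, Polynomial.coeff_X_pow] at h
  simp only [Matrix.mulVec, dotProduct, tm, Matrix.of_apply]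
  simp only [smul_eq_mul] at h
  rw [h]
  simp [eq_comm]

theorem cramer_tm (a q : ℕ → ℝ) (x : ℝ) (k : ℕ)
    (hQ : tm x (k + 1) * hk a (k + 1) * (tm x (k + 1)).transpose = hk q (k + 1))
    (v : Fin (k + 1) → ℝ) :
    Matrix.cramer (hk a (k + 1)) v (Fin.last k)
      = Matrix.cramer (hk q (k + 1)) ((tm x (k + 1)).mulVec v) (Fin.last k) := by
  have h : (tm x (k + 1)).transpose.mulVec
      (Matrix.cramer (hk q (k + 1)) ((tm x (k + 1)).mulVec v)) = Matrix.cramer (hk a (k + 1)) v := by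
    rw [Matrix.cramer_eq_adjugate_mulVec, Matrix.cramer_eq_adjugate_mulVec, ← hQ,
      Matrix.adjugate_mul_distrib, Matrix.adjugate_mul_distrib, Matrix.mulVec_mulVec,
      Matrix.mulVec_mulVec, ← Matrix.mul_assoc, ← Matrix.mul_assoc, Matrix.mul_adjugate,
      Matrix.det_transpose, tm_det, one_smul, Matrix.one_mul, Matrix.mul_assoc,
      Matrix.adjugate_mul, tm_det, one_smul, Matrix.mul_one]
  rw [← h]
  simp only [Matrix.mulVec, dotProduct, Matrix.transpose_apply]
  rw [Finset.sum_eq_single (Fin.last k)]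
  · simp [tm]
  · intro s _ hs
    have : (s : ℕ) < k := by
      have := s.2
      have h2 : (s : ℕ) ≠ k := fun h => hs (Fin.ext h)
      omega
    simp [tm, Nat.choose_eq_zero_of_lt this]
  · simp

theorem iter_poly (P : Polynomial ℝ) (i : ℕ) :
    iteratedDeriv i (fun y => P.eval y) = fun y => ((Polynomial.derivative^[i]) P).eval y := by
  induction i with
  | zero => simp
  | succ i ih =>
    rw [iteratedDeriv_succ, ih, Function.iterate_succ_apply']
    ext y
    simp

theorem iter_p (a q : ℕ → ℝ) (x : ℝ) (k i : ℕ) (p : ℝ → ℝ)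
    (hQ : tm x (k + 1) * hk a (k + 1) * (tm x (k + 1)).transpose = hk q (k + 1))
    (hp : ∀ y, p y = Matrix.cramer (hk a (k + 1)) (fun r => y ^ (r : ℕ)) (Fin.last k)) :
    iteratedDeriv i p x = (i.factorial : ℝ) * cf q i k := by
  let P : Polynomial ℝ := ∑ r : Fin (k + 1), Polynomial.monomial (r : ℕ) (cf a r k)
  have hpP : p = fun y => P.eval y := by
    ext y
    rw [hp, cramer_expand a k (k + 1) (by omega) (fun r => y ^ r)]
    simp only [P, Polynomial.eval_finsetSum, Polynomial.eval_monomial]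
    exact Finset.sum_congr rfl fun r _ => mul_comm _ _
  rw [hpP, iter_poly, ← Polynomial.factorial_smul_hasseDeriv]
  have : cf q i k = Matrix.cramer (hk a (k + 1))
      (fun s => x ^ ((s : ℕ) - i) * ((s : ℕ).choose i : ℝ)) (Fin.last k) := by
    rw [cramer_tm a q x k hQ, tm_vec]
    rfl
  rw [this, cramer_expand a k (k + 1) (by omega) (fun s => x ^ (s - i) * (s.choose i : ℝ))]
  rw [LinearMap.smul_apply]
  beta_reduce
  rw [Polynomial.eval_smul, nsmul_eq_mul]
  simp only [P, map_sum, Polynomial.hasseDeriv_monomial,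
    Polynomial.eval_finsetSum, Polynomial.eval_monomial]
  congr 1
  apply Finset.sum_congr rfl
  intro r _
  ring


/-- Leclerc's theorem relating Wronskians of (pseudo-)orthogonal
polynomials built from a sequence `a` to Hankel determinants of the
polynomials `q_n`. -/
theorem leclerc_wronskian_hankel (a : ℕ → ℝ) (p q : ℕ → ℝ → ℝ)
    (hp0 : p 0 = fun _ => 1)
    (hp : ∀ n : ℕ, 1 ≤ n → ∀ x : ℝ, p n x =
      Matrix.det (Matrix.of fun i j : Fin (n + 1) =>
        if (j : ℕ) < n then a ((i : ℕ) + (j : ℕ)) else x ^ (i : ℕ)))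
    (hq : ∀ n : ℕ, ∀ x : ℝ, q n x =
      ∑ j ∈ Finset.range (n + 1), a j * (n.choose j : ℝ) * (-x) ^ (n - j)) :
    ∀ n m : ℕ, 1 ≤ n → 1 ≤ m → ∀ x : ℝ,
      Matrix.det (Matrix.of fun i j : Fin n =>
        iteratedDeriv (i : ℕ) (p (m + (j : ℕ))) x)
      = (-1 : ℝ) ^ (n * m) *
        (∏ k ∈ Finset.Icc 1 (n - 1),
          ((k.factorial : ℝ) *
            Matrix.det (Matrix.of fun i j : Fin (k + m) => a ((i : ℕ) + (j : ℕ))))) *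
        Matrix.det (Matrix.of fun i j : Fin m => q (n + (i : ℕ) + (j : ℕ)) x) := by
  intro n m hn hm x
  have hQ := tm_conj a (fun j => q j x) x (fun j => hq j x)
  have hH : ∀ k, (hk (fun j => q j x) k).det = (hk a k).det := by
    intro k
    rw [← hQ k, Matrix.det_mul, Matrix.det_mul, Matrix.det_transpose, tm_det]
    ring
  have h1 : (Matrix.of fun i j : Fin n => iteratedDeriv (i : ℕ) (p (m + (j : ℕ))) x)
      = Matrix.of fun i j : Fin n => ((i : ℕ).factorial : ℝ) *
        (Matrix.of fun i j : Fin n => cf (fun j => q j x) i (m + j)) i j := by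
    ext i j
    simp only [Matrix.of_apply]
    apply iter_p a (fun j => q j x) x (m + j) i _ (hQ _)
    intro y
    rw [hp (m + j) (by omega), Matrix.cramer_apply]
    congr 1
    ext r s
    rw [Matrix.updateCol_apply, Matrix.of_apply]
    have := s.2
    by_cases hs : (s : ℕ) < m + j
    · have : s ≠ Fin.last (m + j) := fun h => by rw [h] at hs; simp at hs
      simp [hs, this, hk]
    · have : s = Fin.last (m + j) := Fin.ext (by simp; omega)
      rw [if_neg hs, if_pos this]
  rw [h1, Matrix.det_mul_column, core' _ n m hn]
  simp only [hH]
  obtain ⟨n, rfl⟩ : ∃ k, n = k + 1 := ⟨n - 1, by omega⟩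
  have h2 : ∏ k ∈ Finset.Icc 1 (n + 1 - 1), ((k.factorial : ℝ) *
        Matrix.det (Matrix.of fun i j : Fin (k + m) => a ((i : ℕ) + (j : ℕ))))
      = (∏ i : Fin (n + 1), ((i : ℕ).factorial : ℝ)) * ∏ j : Fin n, (hk a (m + j + 1)).det := by
    rw [Fin.prod_univ_succ, ← Finset.Ico_add_one_right_eq_Icc, Finset.prod_Ico_eq_prod_range,
      Finset.prod_range]
    simp only [Fin.val_zero, Nat.factorial_zero, Nat.cast_one, one_mul]
    rw [← Finset.prod_mul_distrib]
    apply Finset.prod_congr (by simp)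
    intro j _
    have e : 1 + (j : ℕ) + m = m + j + 1 := by omega
    change _ * (hk a (1 + (j : ℕ) + m)).det = _
    rw [e, Fin.val_succ, add_comm 1 (j : ℕ)]
  rw [h2]
  change _ * ((-1) ^ ((n + 1) * m) * (∏ j : Fin n, (hk a (m + j + 1)).det) * _) = _
  ring
end

section
/- Let T, (r_n), (s_n) be as in the context, let B : \mathbb{C}[x] \times \mathbb{C}[x] \to \mathbb{C} be a bilinear form, and let (\psi_i)_{i\ge 0} be polynomials with deg \psi_i = i. Set \mu_j^i = B(r_j, \psi_i). Define p_0 = 1 and, for k \ge 1, let p_k(x) be the determinant of the (k+1)\times(k+1) matrix whose (i,j)-entry is \mu_{k+1-i}^{j-1} for 1 \le j \le k and whose (i, k+1)-entry is r_{k+1-i}(x). Define q_n^i(x) = \sum_{j=0}^n \mu_j^i s_{n-j}(x), and for k \ge 0 let \Omega_k = \det( \mu_{k+1-i}^{j-1} )_{i,j=1}^{k+1}. Then for all integers n, m \ge 1 and all x: \det( T^{i-1}(p_{m+j-1})(x) )_{i,j=1}^n = (-1)^{\binom{n}{2}} \left( \prod_{j=0}^{n-2} \Omega_{m+j} \right)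 \cdot \det( q^{j-1}_{n+m-i}(x) )_{i,j=1}^m. -/
open Polynomial

def wphi (Q : ℕ → ℕ → ℂ) (k : ℕ) (v : ℕ → ℂ) : ℂ :=
  Matrix.det (Matrix.of fun i j : Fin (k + 1) =>
    if (j : ℕ) < k then Q (k - (i : ℕ)) (j : ℕ) else v (k - (i : ℕ)))

lemma wdet_last {R : Type*} [CommRing R] (Q : ℕ → ℕ → R) (k : ℕ) (v : ℕ → R) :
    Matrix.det (Matrix.of fun i j : Fin (k + 1) =>
      if (j : ℕ) < k then Q (k - (i : ℕ)) (j : ℕ) else v (k - (i : ℕ)))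
    = ∑ i : Fin (k + 1), v (k - (i : ℕ)) * ((-1) ^ ((i : ℕ) + k) *
      Matrix.det (Matrix.of fun a b : Fin k => Q (k - (i.succAbove a : ℕ)) (b : ℕ))) := by
  rw [Matrix.det_succ_column _ (Fin.last k)]
  refine Finset.sum_congr rfl fun i _ => ?_
  have : (Matrix.of fun i j : Fin (k + 1) =>
      if (j : ℕ) < k then Q (k - (i : ℕ)) (j : ℕ) else v (k - (i : ℕ))).submatrix
        i.succAbove (Fin.last k).succAbove =
      Matrix.of fun a b : Fin k => Q (k - (i.succAbove a : ℕ)) (b : ℕ) := by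
    ext a b
    simp
  rw [this]
  simp
  ring

lemma wphi_expand (Q : ℕ → ℕ → ℂ) (k : ℕ) (v : ℕ → ℂ) :
    wphi Q k v = ∑ i : Fin (k + 1), v (k - (i : ℕ)) * ((-1) ^ ((i : ℕ) + k) *
      Matrix.det (Matrix.of fun a b : Fin k => Q (k - (i.succAbove a : ℕ)) (b : ℕ))) :=
  wdet_last Q k v

lemma wphi_self_lt (Q : ℕ → ℕ → ℂ) (k l : ℕ) (h : l < k) :
    wphi Q k (fun a => Q a l) = 0 := by
  unfold wphi
  refine Matrix.det_zero_of_column_eq (i := ⟨l, by omega⟩) (j := Fin.last k) ?_ ?_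
  · intro hh
    have := congrArg Fin.val hh
    simp at this
    omega
  · intro i
    simp [h]

lemma wphi_zero (Q : ℕ → ℕ → ℂ) (k : ℕ) :
    wphi Q k (Pi.single 0 1) = Matrix.det (Matrix.of fun a b : Fin k => Q (k - (a : ℕ)) (b : ℕ)) := by
  rw [wphi_expand, Finset.sum_eq_single (Fin.last k)]
  · simp
  · intro i _ hi
    have : k - (i : ℕ) ≠ 0 := by
      have := i.2
      have h2 : (i : ℕ) ≠ k := fun h => hi (Fin.ext h)
      omega
    simp [Pi.single_eq_of_ne this]
  · simp

lemma wphi_top (Q : ℕ → ℕ → ℂ) (k : ℕ) :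
    wphi Q (k + 1) (Pi.single (k + 1) 1) = (-1) ^ (k + 1) * wphi Q k (fun a => Q a k) := by
  rw [wphi_expand, Finset.sum_eq_single 0]
  · simp
    unfold wphi
    congr 1
    ext i j
    simp
    intro h
    have : (j : ℕ) = k := by omega
    rw [this]
  · intro i _ hi
    have : k + 1 - (i : ℕ) ≠ k + 1 := by
      have := i.2
      have h2 : (i : ℕ) ≠ 0 := fun h => hi (Fin.ext h)
      omega
    simp [Pi.single_eq_of_ne this]
  · simp

lemma wphi_lin {ι : Type*} [Fintype ι] (Q : ℕ → ℕ → ℂ) (k : ℕ) (v : ℕ → ℂ) (c : ι → ℂ)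
    (w : ι → ℕ → ℂ) (h : ∀ a, a ≤ k → v a = ∑ t, w t a * c t) :
    wphi Q k v = ∑ t, wphi Q k (w t) * c t := by
  simp_rw [wphi_expand, Finset.sum_mul]
  rw [Finset.sum_comm]
  refine Finset.sum_congr rfl fun i _ => ?_
  rw [h _ (Nat.sub_le _ _), Finset.sum_mul]
  refine Finset.sum_congr rfl fun t _ => ?_
  ring

lemma wdet_anti (n : ℕ) : Matrix.det (Matrix.of fun i j : Fin n =>
    if (i : ℕ) + j + 1 = n then (1 : ℂ) else 0) = (-1) ^ n.choose 2 := by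
  induction n with
  | zero => simp
  | succ n ih =>
    rw [Matrix.det_succ_row_zero, Finset.sum_eq_single (Fin.last n)]
    · have : (Matrix.of fun i j : Fin (n + 1) =>
          if (i : ℕ) + j + 1 = n + 1 then (1 : ℂ) else 0).submatrix Fin.succ
            (Fin.last n).succAbove = Matrix.of fun i j : Fin n =>
          if (i : ℕ) + j + 1 = n then (1 : ℂ) else 0 := by
        ext i j
        simp
        congr 1
        apply propext
        omega
      rw [this, ih, Nat.choose_succ_succ' n 1]
      simp [pow_add]
    · intro j _ hj
      have h2 : (j : ℕ) ≠ n := fun h => hj (Fin.ext h)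
      simp [h2]
    · simp

lemma wsign_rev (n : ℕ) : ((Equiv.Perm.sign (Fin.revPerm (n := n)) : ℤ) : ℂ) = (-1) ^ n.choose 2 := by
  have h := Matrix.det_permute (Fin.revPerm (n := n)) (1 : Matrix (Fin n) (Fin n) ℂ)
  rw [Matrix.det_one, mul_one] at h
  rw [← wdet_anti, ← h]
  congr 1
  ext i j
  simp only [Matrix.submatrix_apply, Matrix.one_apply, Matrix.of_apply, Fin.revPerm_apply, id,
    Fin.ext_iff, Fin.val_rev]
  congr 1
  apply propext
  omega

/-- key multiplication identity -/
lemma wkey (Q : ℕ → ℕ → ℂ) (n m : ℕ) (v : ℕ → ℂ) :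
    Matrix.det (Matrix.of fun i j : Fin (n + 1) => wphi Q (m + (j : ℕ)) (Pi.single (i : ℕ) 1)) *
      ((-1) ^ (n + 1).choose 2 * wphi Q (m + n) v) =
    ((∏ j ∈ Finset.range n, wphi Q (m + j) (fun a => Q a (m + j))) * wphi Q (m + n) v) *
      Matrix.det (Matrix.of fun i j : Fin m => Q (m + n - (i : ℕ)) (j : ℕ)) := by
  set cd : Fin (n + 1) ⊕ Fin m → ℕ := Sum.elim (fun i => (i : ℕ)) (fun a => m + n - (a : ℕ)) with hcd
  set w : Fin (n + 1) ⊕ Fin m → ℕ → ℂ :=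
    Sum.elim (fun j a => if (j : ℕ) < n then Q a (m + (j : ℕ)) else v a)
      (fun b a => Q a (b : ℕ)) with hw
  have hinj : Function.Injective cd := by
    rintro (a | a) (b | b) h <;> simp [hcd] at h ⊢ <;> have := a.2 <;> have := b.2 <;>
      first | omega | (apply Fin.ext; omega)
  have hsur : ∀ a, a ≤ m + n → ∃ t, cd t = a := by
    intro a ha
    by_cases h : a < n + 1
    · exact ⟨Sum.inl ⟨a, h⟩, rfl⟩
    · refine ⟨Sum.inr ⟨m + n - a, by omega⟩, ?_⟩
      simp [hcd]
      omega
  let F : Matrix (Fin (n + 1) ⊕ Fin m) (Fin (n + 1) ⊕ Fin m) ℂ :=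
    Matrix.fromBlocks
      (Matrix.of fun j i : Fin (n + 1) => wphi Q (m + (j : ℕ)) (Pi.single (i : ℕ) 1))
      (Matrix.of fun (j : Fin (n + 1)) (a : Fin m) =>
        wphi Q (m + (j : ℕ)) (Pi.single (m + n - (a : ℕ)) 1)) 0 1
  let A : Matrix (Fin (n + 1) ⊕ Fin m) (Fin (n + 1) ⊕ Fin m) ℂ :=
    Matrix.of fun c t => w t (cd c)
  have hrow : ∀ (j : Fin (n + 1)) t, (F * A) (Sum.inl j) t = wphi Q (m + (j : ℕ)) (w t) := by
    intro j t
    rw [Matrix.mul_apply, wphi_lin Q _ (w t) (fun c => w t (cd c)) (fun c => Pi.single (cd c) 1)]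
    · refine Finset.sum_congr rfl fun c _ => ?_
      rcases c with c | c <;> rfl
    · intro a ha
      obtain ⟨c, rfl⟩ := hsur a (by have := j.2; omega)
      rw [Finset.sum_eq_single c]
      · simp
      · intro b _ hb
        rw [Pi.single_eq_of_ne (fun h => hb (hinj h).symm)]
        simp
      · simp
  have hrow2 : ∀ (a : Fin m) t, (F * A) (Sum.inr a) t = w t (m + n - (a : ℕ)) := by
    intro a t
    rw [Matrix.mul_apply, Finset.sum_eq_single (Sum.inr a)]
    · simp [F, A, hcd]
    · rintro (b | b) _ hb
      · simp [F]
      · have : a ≠ b := fun h => hb (by rw [h])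
        simp [F, Matrix.one_apply_ne this]
    · simp
  have hFA : F * A = Matrix.fromBlocks
      (Matrix.of fun j j' : Fin (n + 1) => wphi Q (m + (j : ℕ)) (w (Sum.inl j'))) 0
      (Matrix.of fun (a : Fin m) (j' : Fin (n + 1)) => w (Sum.inl j') (m + n - (a : ℕ)))
      (Matrix.of fun i j : Fin m => Q (m + n - (i : ℕ)) (j : ℕ)) := by
    ext (c | c) (t | t)
    · rw [hrow]; rfl
    · rw [hrow]
      simp only [hw, Sum.elim_inr, Matrix.fromBlocks_apply₁₂, Matrix.zero_apply]
      exact wphi_self_lt Q _ _ (by have := t.2; omega)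
    · rw [hrow2]; rfl
    · rw [hrow2]; rfl
  have hdF : F.det = Matrix.det (Matrix.of fun i j : Fin (n + 1) =>
      wphi Q (m + (j : ℕ)) (Pi.single (i : ℕ) 1)) := by
    simp only [F]
    rw [Matrix.det_fromBlocks_zero₂₁, Matrix.det_one, mul_one, ← Matrix.det_transpose]
    rfl
  have hdA : A.det = (-1) ^ (n + 1).choose 2 * wphi Q (m + n) v := by
    let D : Matrix (Fin (m + n + 1)) (Fin (m + n + 1)) ℂ :=
      Matrix.of fun i j => if (j : ℕ) < m + n then Q (m + n - (i : ℕ)) (j : ℕ) else v (m + n - (i : ℕ))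
    let e : Fin (n + 1) ⊕ Fin m ≃ Fin (m + n + 1) :=
      (Equiv.sumComm _ _).trans (finSumFinEquiv (m := m) (n := n + 1))
    have he1 : ∀ j : Fin (n + 1), (e (Sum.inl j) : ℕ) = m + j := by
      intro j
      simp [e]
    have he2 : ∀ j : Fin m, (e (Sum.inr j) : ℕ) = j := by
      intro j
      simp [e]
    have hA : A = (D.submatrix e e).submatrix (Equiv.sumCongr (Fin.revPerm (n := n + 1)) (Equiv.refl _)) id := by
      have hc : ∀ c, m + n - (e (Equiv.sumCongr (Fin.revPerm (n := n + 1)) (Equiv.refl _) c) : ℕ) = cd c := by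
        rintro (c | c)
        · simp only [Equiv.sumCongr_apply, Sum.map_inl, he1, Fin.revPerm_apply, Fin.val_rev, hcd,
            Sum.elim_inl]
          have := c.2
          omega
        · simp [he2, hcd]
      ext c t
      simp only [A, D, Matrix.submatrix_apply, Matrix.of_apply, id]
      rw [hc]
      rcases t with t | t
      · simp [hw, he1]
      · have : (t : ℕ) < m + n := by have := t.2; omega
        simp [hw, he2, this]
    rw [hA]
    have := Matrix.det_permute (Equiv.Perm.sumCongr (Fin.revPerm (n := n + 1)) (1 : Equiv.Perm (Fin m))) (D.submatrix e e)
    rw [Matrix.det_submatrix_equiv_self, Equiv.Perm.sign_sumCongr, Equiv.Perm.sign_one, mul_one, wsign_rev] at this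
    exact this
  rw [← hdF, ← hdA, ← Matrix.det_mul, hFA, Matrix.det_fromBlocks_zero₁₂]
  congr 1
  rw [Matrix.det_of_isUpperTriangular]
  · rw [Fin.prod_univ_castSucc, ← Fin.prod_univ_eq_prod_range (fun j => wphi Q (m + j) (fun a => Q a (m + j)))]
    simp [hw]
  · intro i j hij
    have hij' : (j : ℕ) < i := hij
    have : (j : ℕ) < n := by have := i.2; omega
    simp only [Matrix.of_apply, hw, Sum.elim_inl, this, if_true]
    exact wphi_self_lt Q _ _ (by omega)

lemma wmain (Q : ℕ → ℕ → ℂ) (n m : ℕ) :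
    Matrix.det (Matrix.of fun i j : Fin (n + 1) => wphi Q (m + (j : ℕ)) (Pi.single (i : ℕ) 1)) =
    (-1) ^ (n + 1).choose 2 * (∏ j ∈ Finset.range n, wphi Q (m + j) (fun a => Q a (m + j))) *
      Matrix.det (Matrix.of fun i j : Fin m => Q (m + n - (i : ℕ)) (j : ℕ)) := by
  by_cases h : ∃ v, wphi Q (m + n) v ≠ 0
  · obtain ⟨v, hv⟩ := h
    have hk := wkey Q n m v
    have h1 : ((-1 : ℂ) ^ (n + 1).choose 2) * (-1 : ℂ) ^ (n + 1).choose 2 = 1 := by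
      rw [← mul_pow]; simp
    apply mul_right_cancel₀ hv
    linear_combination ((-1 : ℂ) ^ (n + 1).choose 2) * hk - (Matrix.det (Matrix.of fun i j : Fin (n + 1) => wphi Q (m + (j : ℕ)) (Pi.single (i : ℕ) 1))) * wphi Q (m + n) v * h1
  · push Not at h
    rcases n with _ | n
    · simp [wphi_zero]
    · have h2 := h (Pi.single (m + (n + 1)) 1)
      rw [← add_assoc, wphi_top] at h2
      have h3 : wphi Q (m + n) (fun a => Q a (m + n)) = 0 := by
        rcases mul_eq_zero.1 h2 with h | h
        · simp at h
        · exact h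
      rw [Finset.prod_range_succ, h3, mul_zero, mul_zero, zero_mul]
      apply Matrix.det_eq_zero_of_column_eq_zero (Fin.last (n + 1))
      intro i
      simp [h]

lemma wconv (U Q : ℕ → ℕ → ℂ) (σ : ℕ → ℂ) (h0 : σ 0 = 1)
    (hQ : ∀ a l, Q a l = ∑ j ∈ Finset.range (a + 1), U j l * σ (a - j))
    (k : ℕ) (v v' : ℕ → ℂ) (hv : ∀ a, v' a = ∑ j ∈ Finset.range (a + 1), v j * σ (a - j)) :
    wphi U k v = wphi Q k v' := by
  let S : Matrix (Fin (k + 1)) (Fin (k + 1)) ℂ :=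
    Matrix.of fun i j => if (i : ℕ) ≤ j then σ ((j : ℕ) - i) else 0
  have hS : S.det = 1 := by
    rw [Matrix.det_of_isUpperTriangular]
    · simp [S, h0]
    · intro i j hij
      have hij' : (j : ℕ) < i := hij
      simp only [S, Matrix.of_apply]
      rw [if_neg (by omega)]
  have key : ∀ (f : ℕ → ℂ) (i : Fin (k + 1)), ∑ j, S i j * f (k - (j : ℕ)) =
      ∑ j ∈ Finset.range (k - (i : ℕ) + 1), f j * σ (k - (i : ℕ) - j) := by
    intro f i
    simp only [S, Matrix.of_apply]
    rw [Fin.sum_univ_eq_sum_range (fun j => (if (i : ℕ) ≤ j then σ (j - i) else 0) * f (k - j)) (k + 1),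
      ← Finset.sum_range_reflect]
    have hi := i.2
    have : Finset.range (k - (i : ℕ) + 1) ⊆ Finset.range (k + 1) := by
      intro a; simp; omega
    rw [← Finset.sum_subset this]
    · refine Finset.sum_congr rfl fun j hj => ?_
      have hj := Finset.mem_range.1 hj
      rw [if_pos (by omega), mul_comm]
      congr 2 <;> omega
    · intro j hj hj'
      simp at hj hj'
      rw [if_neg (by omega), zero_mul]
  unfold wphi
  rw [← one_mul (Matrix.det _), ← hS, ← Matrix.det_mul]
  congr 1
  ext i j
  rw [Matrix.mul_apply]
  by_cases hj : (j : ℕ) < k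
  · simp only [Matrix.of_apply, hj, if_true]
    rw [hQ, ← key (fun a => U a j)]
  · simp only [Matrix.of_apply, hj, if_false]
    rw [hv, ← key v]

/-- the main theorem for a general bilinear form on complex
polynomials (Theorem `mth` of the paper). -/
theorem wronskian_type_det_bilinear
    (T : Module.End ℂ (Polynomial ℂ))
    (hTC : ∀ c : ℂ, T (Polynomial.C c) = 0)
    (hTdeg : ∀ f : Polynomial ℂ, 0 < f.natDegree →
      (T f).degree = ((f.natDegree - 1 : ℕ) : WithBot ℕ))
    (r s : ℕ → Polynomial ℂ)
    (hr0 : r 0 = 1) (hrdeg : ∀ n : ℕ, (r n).degree = (n : ℕ))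
    (hrT : ∀ n : ℕ, 1 ≤ n → T (r n) = r (n - 1))
    (hs0 : s 0 = 1)
    (hs : ∀ n : ℕ, 1 ≤ n → ∑ j ∈ Finset.range (n + 1), s j * r (n - j) = 0)
    (B : Polynomial ℂ →ₗ[ℂ] Polynomial ℂ →ₗ[ℂ] ℂ)
    (ψ : ℕ → Polynomial ℂ) (hψdeg : ∀ i : ℕ, (ψ i).degree = (i : ℕ))
    (M : ℕ → ℕ → ℂ) (hM : ∀ j i : ℕ, M j i = B (r j) (ψ i))
    (p : ℕ → Polynomial ℂ) (hp0 : p 0 = 1)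
    (hp : ∀ k : ℕ, 1 ≤ k → p k =
      Matrix.det (Matrix.of fun i j : Fin (k + 1) =>
        if (j : ℕ) < k then Polynomial.C (M (k - (i : ℕ)) (j : ℕ)) else r (k - (i : ℕ))))
    (q : ℕ → ℕ → Polynomial ℂ)
    (hq : ∀ n i : ℕ, q n i = ∑ j ∈ Finset.range (n + 1), Polynomial.C (M j i) * s (n - j))
    (Ω : ℕ → ℂ)
    (hΩ : ∀ k : ℕ, Ω k =
      Matrix.det (Matrix.of fun i j : Fin (k + 1) => M (k - (i : ℕ)) (j : ℕ))) :
    ∀ n m : ℕ, 1 ≤ n → 1 ≤ m → ∀ x : ℂ,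
      Matrix.det (Matrix.of fun i j : Fin n =>
        ((T ^ (i : ℕ)) (p (m + (j : ℕ)))).eval x)
      = (-1 : ℂ) ^ n.choose 2 * (∏ j ∈ Finset.range (n - 1), Ω (m + j)) *
        Matrix.det (Matrix.of fun i j : Fin m =>
          (q (n + m - 1 - (i : ℕ)) (j : ℕ)).eval x) := by
  intro n m hn hm x
  obtain ⟨n, rfl⟩ : ∃ k, n = k + 1 := ⟨n - 1, by omega⟩
  let Q : ℕ → ℕ → ℂ := fun a l => (q a l).eval x
  let σ : ℕ → ℂ := fun a => (s a).eval x
  have hσ0 : σ 0 = 1 := by simp [σ, hs0]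
  have hQ : ∀ a l, Q a l = ∑ j ∈ Finset.range (a + 1), M j l * σ (a - j) := by
    intro a l
    simp [Q, σ, hq, Polynomial.eval_finsetSum]
  have hΩ' : ∀ k, Ω k = wphi Q k (fun a => Q a k) := by
    intro k
    rw [← wconv M Q σ hσ0 hQ k (fun a => M a k) _ (fun a => hQ a k), hΩ, wphi]
    congr 1
    ext i j
    simp only [Matrix.of_apply]
    split_ifs with h
    · rfl
    · have : (j : ℕ) = k := by have := j.2; omega
      rw [this]
  have hTr : ∀ i a, (T ^ i) (r a) = if i ≤ a then r (a - i) else 0 := by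
    intro i
    induction i with
    | zero => simp
    | succ i ih =>
      intro a
      rw [pow_succ, Module.End.mul_apply]
      rcases a with _ | a
      · have : T (r 0) = 0 := by
          rw [hr0, ← Polynomial.C_1, hTC]
        simp [this]
      · rw [hrT _ (by omega), Nat.add_sub_cancel, ih]
        simp
  have hdelta : ∀ a i, (Pi.single i 1 : ℕ → ℂ) a =
      ∑ j ∈ Finset.range (a + 1), (if i ≤ j then (r (j - i)).eval x else 0) * σ (a - j) := by
    intro a i
    by_cases hai : i ≤ a
    · obtain ⟨b, rfl⟩ := Nat.exists_eq_add_of_le hai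
      rw [add_assoc, Finset.sum_range_add, Finset.sum_eq_zero, zero_add]
      · have : ∑ j ∈ Finset.range (b + 1), (if i ≤ i + j then (r (i + j - i)).eval x else 0) * σ (i + b - (i + j))
            = (∑ j ∈ Finset.range (b + 1), s j * r (b - j)).eval x := by
          rw [← Finset.sum_range_reflect, Polynomial.eval_finsetSum]
          refine Finset.sum_congr rfl fun j hj => ?_
          have hj := Finset.mem_range.1 hj
          rw [if_pos (by omega), Polynomial.eval_mul, mul_comm]
          simp only [σ]
          rw [show i + b - (i + (b + 1 - 1 - j)) = j by omega,
            show i + (b + 1 - 1 - j) - i = b - j by omega]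
        rw [this]
        rcases b with _ | b
        · simp [hs0, hr0]
        · rw [hs _ (by omega)]
          simp
      · intro j hj
        have hj := Finset.mem_range.1 hj
        rw [if_neg (by omega), zero_mul]
    · rw [Pi.single_eq_of_ne (by omega), Finset.sum_eq_zero]
      intro j hj
      have hj := Finset.mem_range.1 hj
      rw [if_neg (by omega), zero_mul]
  have hTp : ∀ i k, 1 ≤ k → ((T ^ i) (p k)).eval x = wphi Q k (Pi.single i 1) := by
    intro i k hk
    rw [← wconv M Q σ hσ0 hQ k (fun j => if i ≤ j then (r (j - i)).eval x else 0) _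
      (fun a => hdelta a i), hp k hk, wdet_last (fun a l => Polynomial.C (M a l)) k r, wphi_expand,
      map_sum, Polynomial.eval_finsetSum]
    refine Finset.sum_congr rfl fun t _ => ?_
    have : ((-1 : Polynomial ℂ) ^ ((t : ℕ) + k) *
      Matrix.det (Matrix.of fun a b : Fin k => Polynomial.C (M (k - (t.succAbove a : ℕ)) (b : ℕ)))) =
      Polynomial.C ((-1) ^ ((t : ℕ) + k) *
      Matrix.det (Matrix.of fun a b : Fin k => M (k - (t.succAbove a : ℕ)) (b : ℕ))) := by
      rw [Polynomial.C_mul, RingHom.map_det]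
      simp
      rfl
    rw [this, mul_comm, ← Polynomial.smul_eq_C_mul, map_smul, hTr, Polynomial.eval_smul, smul_eq_mul,
      mul_comm]
    congr 1
    split_ifs <;> simp
  have hmain := wmain Q n m
  have e1 : (Matrix.of fun i j : Fin (n + 1) => ((T ^ (i : ℕ)) (p (m + (j : ℕ)))).eval x) =
      Matrix.of fun i j : Fin (n + 1) => wphi Q (m + (j : ℕ)) (Pi.single (i : ℕ) 1) := by
    ext i j
    simp only [Matrix.of_apply]
    exact hTp _ _ (by omega)
  rw [e1, hmain]
  have e2 : n + 1 + m - 1 = m + n := by omega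
  rw [e2]
  simp only [Nat.add_sub_cancel, hΩ']
  rfl
end

section
/- Let T be a linear operator on the space of real polynomials such that deg(T(p)) = deg(p) - 1 for every polynomial p, let u be a real number, and let (r_n)_{n\ge 0} be polynomials with r_0 = 1, deg r_n = n, T(r_n) = r_{n-1} and r_n(u) = 0 for n \ge 1. Assume there are real numbers a_1, a_2, \dots with a_1 = u such that r_n(x) = \sigma_n \prod_{j=1}^n (x - a_j) for n \ge 1, where \sigma_n is the leading coefficient of r_n (and \sigma_0 = 1). Let \mu be a positive Borel measure on \mathbb{R} for which every polynomial is integrable, admitting a sequence (\hat p_n)_{n\ge 0} of monic orthogonal polynomials (deg \hat p_n = n, \hat p_n monic, \int \hat p_n \hat p_k d\mu = 0 for n \ne k), and write \|\hat p_j\|^2 = \int \hat p_j^2 d\mu. Then for all integers n \ge 0, m \ge 1: \int_{\mathbb{R}^m} \Lambda^2(x_1,\dots,x_m) \prod_{j=1}^m r_n(x_j) \; d\mu(x_1)\cdots d\mu(x_m) = (-1)^{mn} \, m! \, \sigma_n^m \left( \prod_{j=0}^{m-1} \|\hat p_j\|^2 \right) \left( \prod_{j=0}^{n-1} \sigma_j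 \right) \cdot \det( T^{i-1}(\hat p_{m+j-1})(u) )_{i,j=1}^n, where the 0\times 0 determinant on the right equals 1 when n = 0. -/
open MeasureTheory Polynomial

namespace SelbergAux

lemma andreief (m : ℕ) (μ : Measure ℝ) [SigmaFinite μ]
    (hint : ∀ f : Polynomial ℝ, Integrable (fun x => f.eval x) μ)
    (p : ℕ → Polynomial ℝ) (hmonic : ∀ n : ℕ, (p n).Monic)
    (hpdeg : ∀ n : ℕ, (p n).natDegree = n) (w : Polynomial ℝ) :
    (∫ x : Fin m → ℝ,
        (∏ i : Fin m, ∏ j ∈ Finset.Ioi i, (x i - x j)) ^ 2 *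
          ∏ j : Fin m, w.eval (x j) ∂(Measure.pi fun _ => μ)) =
    (m.factorial : ℝ) * Matrix.det (Matrix.of fun i k : Fin m =>
      ∫ t, (p i * (w * p k)).eval t ∂μ) := by
  have h1 : ∀ x : Fin m → ℝ, (∏ i : Fin m, ∏ j ∈ Finset.Ioi i, (x i - x j)) ^ 2 *
          ∏ j : Fin m, w.eval (x j) =
      ∑ σ : Equiv.Perm (Fin m), ∑ τ : Equiv.Perm (Fin m),
        ((Equiv.Perm.sign σ : ℤ) : ℝ) * ((Equiv.Perm.sign τ : ℤ) : ℝ) *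
          ∏ i : Fin m, (p (σ i) * (w * p (τ i))).eval (x i) := by
    intro x
    have hV := Matrix.det_eval_matrixOfPolynomials_eq_det_vandermonde x (fun i => p i)
      (fun i => hpdeg i) (fun i => hmonic i)
    have hsq : (∏ i : Fin m, ∏ j ∈ Finset.Ioi i, (x i - x j)) ^ 2 =
        (Matrix.vandermonde x).det ^ 2 := by
      rw [Matrix.det_vandermonde, ← Finset.prod_pow, ← Finset.prod_pow]
      refine Finset.prod_congr rfl fun i _ => ?_
      rw [← Finset.prod_pow, ← Finset.prod_pow]
      refine Finset.prod_congr rfl fun j _ => ?_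
      ring
    rw [hsq, hV, ← Matrix.det_transpose, Matrix.det_apply', sq, Finset.sum_mul_sum, Finset.sum_mul]
    refine Finset.sum_congr rfl fun σ _ => ?_
    rw [Finset.sum_mul]
    refine Finset.sum_congr rfl fun τ _ => ?_
    simp only [Matrix.transpose_apply, Matrix.of_apply, eval_mul, Finset.prod_mul_distrib]
    ring
  simp_rw [h1]
  have hi : ∀ σ τ : Equiv.Perm (Fin m), Integrable (fun x : Fin m → ℝ =>
      ((Equiv.Perm.sign σ : ℤ) : ℝ) * ((Equiv.Perm.sign τ : ℤ) : ℝ) *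
          ∏ i : Fin m, (p (σ i) * (w * p (τ i))).eval (x i)) (Measure.pi fun _ => μ) := by
    intro σ τ
    refine Integrable.const_mul ?_ _
    exact Integrable.fintype_prod (f := fun i t => (p (σ i) * (w * p (τ i))).eval t)
      (fun i => hint _)
  rw [integral_finsetSum _ (fun σ _ => integrable_finsetSum _ (fun τ _ => hi σ τ))]
  have h2 : ∀ σ : Equiv.Perm (Fin m),
      ∫ x : Fin m → ℝ, ∑ τ : Equiv.Perm (Fin m),
        ((Equiv.Perm.sign σ : ℤ) : ℝ) * ((Equiv.Perm.sign τ : ℤ) : ℝ) *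
          ∏ i : Fin m, (p (σ i) * (w * p (τ i))).eval (x i) ∂(Measure.pi fun _ => μ) =
      Matrix.det (Matrix.of fun i k : Fin m => ∫ t, (p i * (w * p k)).eval t ∂μ) := by
    intro σ
    rw [integral_finsetSum _ (fun τ _ => hi σ τ)]
    set M := (Matrix.of fun i k : Fin m => ∫ t, (p i * (w * p k)).eval t ∂μ) with hM
    have h3 : ∀ τ : Equiv.Perm (Fin m), ∫ x : Fin m → ℝ,
        ((Equiv.Perm.sign σ : ℤ) : ℝ) * ((Equiv.Perm.sign τ : ℤ) : ℝ) *
          ∏ i : Fin m, (p (σ i) * (w * p (τ i))).eval (x i) ∂(Measure.pi fun _ => μ) =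
        ((Equiv.Perm.sign σ : ℤ) : ℝ) * (((Equiv.Perm.sign τ : ℤ) : ℝ) *
          ∏ i : Fin m, (M.submatrix σ id).transpose (τ i) i) := by
      intro τ
      rw [integral_const_mul, mul_assoc,
        integral_fintype_prod_eq_prod (fun i t => (p (σ i) * (w * p (τ i))).eval t)]
      rfl
    simp_rw [h3]
    rw [← Finset.mul_sum, ← Matrix.det_apply', Matrix.det_transpose, Matrix.det_permute,
      ← mul_assoc]
    have : ((Equiv.Perm.sign σ : ℤ) : ℝ) * ((Equiv.Perm.sign σ : ℤ) : ℝ) = 1 := by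
      rcases Int.units_eq_one_or (Equiv.Perm.sign σ) with h | h <;> simp [h]
    rw [this, one_mul]
  simp_rw [h2]
  simp [Fintype.card_perm]

lemma expand (f : ℕ → Polynomial ℝ) (hf : ∀ n, (f n).degree = (n : ℕ)) (N : ℕ) :
    ∀ g : Polynomial ℝ, g.degree < (N : ℕ) →
      ∃ c : ℕ → ℝ, g = ∑ i ∈ Finset.range N, c i • f i := by
  induction N with
  | zero =>
    intro g hg
    refine ⟨0, ?_⟩
    have : g = 0 := by
      rw [← Polynomial.degree_eq_bot]
      exact Nat.WithBot.lt_zero_iff.mp (by simpa using hg)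
    simp [this]
  | succ N ih =>
    intro g hg
    have hne : (f N).coeff N ≠ 0 := Polynomial.coeff_ne_zero_of_eq_degree (hf N)
    obtain ⟨c, hc⟩ := ih (g - (g.coeff N / (f N).coeff N) • f N) (by
      rw [Polynomial.degree_lt_iff_coeff_zero]
      intro k hk
      rcases hk.eq_or_lt with rfl | hk
      · simp [hne]
      · have h1 : g.coeff k = 0 :=
          Polynomial.coeff_eq_zero_of_degree_lt (lt_of_lt_of_le hg (by exact_mod_cast hk))
        have h2 : (f N).coeff k = 0 :=
          Polynomial.coeff_eq_zero_of_degree_lt (by rw [hf]; exact_mod_cast hk)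
        simp [h1, h2])
    refine ⟨fun i => if i = N then g.coeff N / (f N).coeff N else c i, ?_⟩
    rw [Finset.sum_range_succ]
    have : ∑ i ∈ Finset.range N, (if i = N then g.coeff N / (f N).coeff N else c i) • f i =
        ∑ i ∈ Finset.range N, c i • f i :=
      Finset.sum_congr rfl fun i hi => by
        rw [if_neg (Finset.mem_range.mp hi).ne]
    rw [this, ← hc]
    simp

/-- coefficient matrix -/
noncomputable def cm {m n : ℕ} (f : Fin m ⊕ Fin n → Polynomial ℝ) :
    Matrix (Fin m ⊕ Fin n) (Fin m ⊕ Fin n) ℝ :=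
  Matrix.of fun d s => (f s).coeff (finSumFinEquiv d : Fin (m + n))

lemma cm_mul {m n : ℕ} (f g : Fin m ⊕ Fin n → Polynomial ℝ)
    (M : Matrix (Fin m ⊕ Fin n) (Fin m ⊕ Fin n) ℝ)
    (h : ∀ s, f s = ∑ t, M t s • g t) : cm f = cm g * M := by
  ext d s
  simp only [cm, Matrix.of_apply, Matrix.mul_apply, h s, Polynomial.finsetSum_coeff,
    Polynomial.coeff_smul, smul_eq_mul]
  exact Finset.sum_congr rfl fun _ _ => mul_comm _ _

lemma det_cm_nat {m n : ℕ} (f : ℕ → Polynomial ℝ) (hf : ∀ i, (f i).natDegree = i) :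
    (cm (m := m) (n := n) fun s => f (finSumFinEquiv s : Fin (m + n))).det =
      ∏ i ∈ Finset.range (m + n), (f i).leadingCoeff := by
  have : (cm (m := m) (n := n) fun s => f (finSumFinEquiv s : Fin (m + n))) =
      (Matrix.of fun d s : Fin (m + n) => (f s).coeff d).submatrix finSumFinEquiv
        finSumFinEquiv := rfl
  rw [this, Matrix.det_submatrix_equiv_self, Matrix.det_of_isUpperTriangular
    (Matrix.matrixOfPolynomials_blockTriangular (fun i : Fin (m + n) => f i)
      (fun i => (hf i).le)), ← Fin.prod_univ_eq_prod_range (fun i => (f i).leadingCoeff)]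
  refine Finset.prod_congr rfl fun i _ => ?_
  simp [Polynomial.leadingCoeff, hf]

lemma rot_val (N k : ℕ) (i : Fin N) : (((finRotate N) ^ k) i : ℕ) = (i + k) % N := by
  cases N with
  | zero => exact i.elim0
  | succ N =>
    induction k with
    | zero => simp [Nat.mod_eq_of_lt i.2]
    | succ k ih =>
      rw [pow_succ', Equiv.Perm.mul_apply, finRotate_apply, Fin.val_add, ih]
      simp [Nat.add_assoc]

lemma exists_perm (m n : ℕ) (hm : 1 ≤ m) : ∃ π : Equiv.Perm (Fin m ⊕ Fin n),
    (((Equiv.Perm.sign π : ℤ) : ℝ) = (-1) ^ (m * n)) ∧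
    (∀ k : Fin m, ((finSumFinEquiv (π (Sum.inl k)) : Fin (m + n)) : ℕ) = n + k) ∧
    (∀ k : Fin n, ((finSumFinEquiv (π (Sum.inr k)) : Fin (m + n)) : ℕ) = k) := by
  refine ⟨finSumFinEquiv.symm.permCongr ((finRotate (m + n)) ^ n), ?_, ?_, ?_⟩
  · rw [Equiv.Perm.sign_permCongr, map_pow, sign_finRotate]
    push_cast
    rw [← pow_mul]
    obtain ⟨l, rfl⟩ : ∃ l, m = l + 1 := ⟨m - 1, by omega⟩
    rw [show l + 1 + n - 1 = l + n by omega]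
    rcases Nat.even_or_odd n with h | h
    · rw [Even.neg_one_pow (h.mul_left _), Even.neg_one_pow (h.mul_left _)]
    · have : (l + n) * n = (l + 1) * n + (n - 1) * n := by
        obtain ⟨q, rfl⟩ : ∃ q, n = q + 1 := ⟨n - 1, by have := h.pos; omega⟩
        simp; ring
      rw [this, pow_add, Even.neg_one_pow (n := (n - 1) * n), mul_one]
      exact (Nat.Odd.sub_odd h odd_one).mul_right _
  · intro k
    simp only [Equiv.permCongr_apply, Equiv.symm_symm, Equiv.apply_symm_apply, rot_val]
    have := k.2
    simp only [finSumFinEquiv_apply_left, Fin.val_castAdd]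
    rw [Nat.mod_eq_of_lt (by omega), add_comm]
  · intro k
    simp only [Equiv.permCongr_apply, Equiv.symm_symm, Equiv.apply_symm_apply, rot_val]
    have := k.2
    simp only [finSumFinEquiv_apply_right, Fin.val_natAdd]
    rw [show m + (k : ℕ) + n = k + (m + n) by omega, Nat.add_mod_right, Nat.mod_eq_of_lt (by omega)]

lemma T_pow (T : Module.End ℝ (Polynomial ℝ))
    (hTC : ∀ c : ℝ, T (Polynomial.C c) = 0)
    (u : ℝ) (r : ℕ → Polynomial ℝ)
    (hr0 : r 0 = 1)
    (hrT : ∀ n : ℕ, 1 ≤ n → T (r n) = r (n - 1))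
    (hru : ∀ n : ℕ, 1 ≤ n → (r n).eval u = 0) (i : ℕ) :
    ∀ k, ((T ^ i) (r k)).eval u = if k = i then 1 else 0 := by
  induction i with
  | zero =>
    intro k
    rcases k with _ | k
    · simp [hr0]
    · simp [hru]
  | succ i ih =>
    intro k
    rw [pow_succ, Module.End.mul_apply]
    rcases k with _ | k
    · have : T (r 0) = 0 := by rw [hr0, ← Polynomial.C_1, hTC]
      simp [this]
    · rw [hrT _ (by omega)]
      simp [ih]

end SelbergAux

open SelbergAux

/-- Selberg-type integral formula (Theorem `tise` of the paper). -/
theorem selberg_type_integral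
    (T : Module.End ℝ (Polynomial ℝ))
    (hTC : ∀ c : ℝ, T (Polynomial.C c) = 0)
    (hTdeg : ∀ f : Polynomial ℝ, 0 < f.natDegree →
      (T f).degree = ((f.natDegree - 1 : ℕ) : WithBot ℕ))
    (u : ℝ) (r : ℕ → Polynomial ℝ)
    (hr0 : r 0 = 1) (hrdeg : ∀ n : ℕ, (r n).degree = (n : ℕ))
    (hrT : ∀ n : ℕ, 1 ≤ n → T (r n) = r (n - 1))
    (hru : ∀ n : ℕ, 1 ≤ n → (r n).eval u = 0)
    (a : ℕ → ℝ) (ha1 : a 1 = u)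
    (hrfac : ∀ n : ℕ, 1 ≤ n → r n =
      Polynomial.C ((r n).leadingCoeff) *
        ∏ j ∈ Finset.Icc 1 n, (Polynomial.X - Polynomial.C (a j)))
    (μ : Measure ℝ) [SigmaFinite μ]
    (hint : ∀ f : Polynomial ℝ, Integrable (fun x => f.eval x) μ)
    (p : ℕ → Polynomial ℝ) (hmonic : ∀ n : ℕ, (p n).Monic)
    (hpdeg : ∀ n : ℕ, (p n).natDegree = n)
    (hporth : ∀ n k : ℕ, n ≠ k → ∫ x, (p n).eval x * (p k).eval x ∂μ = 0) :
    ∀ n m : ℕ, 1 ≤ m →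
      (∫ x : Fin m → ℝ,
        (∏ i : Fin m, ∏ j ∈ Finset.Ioi i, (x i - x j)) ^ 2 *
          ∏ j : Fin m, (r n).eval (x j)
        ∂(Measure.pi fun _ => μ))
      = (-1 : ℝ) ^ (m * n) * (m.factorial : ℝ) * (r n).leadingCoeff ^ m *
        (∏ j ∈ Finset.range m, ∫ t, ((p j).eval t) ^ 2 ∂μ) *
        (∏ j ∈ Finset.range n, (r j).leadingCoeff) *
        Matrix.det (Matrix.of fun i j : Fin n =>
          ((T ^ (i : ℕ)) (p (m + (j : ℕ)))).eval u) := by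
  intro n m hm
  have hrnat : ∀ k, (r k).natDegree = k := fun k => natDegree_eq_of_degree_eq_some (hrdeg k)
  have hrne : ∀ k, r k ≠ 0 := fun k h => by
    have := hrdeg k
    rw [h, degree_zero] at this
    exact absurd this (by simp)
  have hpd : ∀ k, (p k).degree = (k : ℕ) := fun k => by
    rw [degree_eq_natDegree (hmonic k).ne_zero, hpdeg]
  have hpne : ∀ k, p k ≠ 0 := fun k => (hmonic k).ne_zero
  rw [andreief m μ hint p hmonic hpdeg]
  -- expansion of `r n * p k`
  have hA : ∀ k : Fin m, ∃ c : ℕ → ℝ, r n * p k = ∑ i ∈ Finset.range (m + n), c i • p i := by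
    intro k
    refine expand p hpd (m + n) _ ?_
    rw [degree_mul, hrdeg, hpd]
    have := k.2
    exact_mod_cast (by omega : n + (k : ℕ) < m + n)
  choose A hA using hA
  -- the Gram determinant
  have hG : Matrix.det (Matrix.of fun i k : Fin m => ∫ t, (p i * (r n * p k)).eval t ∂μ) =
      (∏ j ∈ Finset.range m, ∫ t, ((p j).eval t) ^ 2 ∂μ) *
        Matrix.det (Matrix.of fun i k : Fin m => A k i) := by
    rw [← Fin.prod_univ_eq_prod_range (fun j => ∫ t, ((p j).eval t) ^ 2 ∂μ), ← Matrix.det_mul_column]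
    congr 1
    ext i k
    simp only [Matrix.of_apply]
    rw [hA k]
    have : ∀ t : ℝ, (p i * ∑ l ∈ Finset.range (m + n), A k l • p l).eval t =
        ∑ l ∈ Finset.range (m + n), A k l * ((p i).eval t * (p l).eval t) := by
      intro t
      rw [eval_mul, eval_finsetSum, Finset.mul_sum]
      refine Finset.sum_congr rfl fun l _ => ?_
      simp; ring
    simp_rw [this]
    rw [integral_finsetSum]
    · simp_rw [integral_const_mul]
      rw [Finset.sum_eq_single (i : ℕ)]
      · simp_rw [← sq]; ring
      · intro l _ hl
        rw [hporth _ _ (Ne.symm hl), mul_zero]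
      · intro h
        exact absurd (Finset.mem_range.mpr (by have := i.2; omega)) h
    · intro l _
      have := (hint (p i * p l)).const_mul (A k l)
      simpa [eval_mul] using this
  -- expansion of p (m+j) in r
  have hB : ∀ j : Fin n, ∃ c : ℕ → ℝ,
      p (m + j) = ∑ i ∈ Finset.range (n + m), c i • r i := by
    intro j
    refine expand r hrdeg (n + m) _ ?_
    rw [hpd]
    have := j.2
    exact_mod_cast (by omega : m + (j : ℕ) < n + m)
  choose B hB using hB
  have hBT : ∀ (i j : Fin n), ((T ^ (i : ℕ)) (p (m + (j : ℕ)))).eval u = B j i := by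
    intro i j
    rw [hB j, map_sum, eval_finsetSum]
    simp_rw [map_smul, eval_smul, T_pow T hTC u r hr0 hrT hru]
    have := i.2
    simp
    omega
  -- tail is divisible by r n
  have hdiv : ∀ k, ∃ s : Polynomial ℝ, r (n + k) = r n * s := by
    intro k
    rcases Nat.eq_zero_or_pos n with h0 | h0
    · subst h0; exact ⟨r (0 + k), by simp [hr0]⟩
    · have h1 := hrfac n h0
      have h2 := hrfac (n + k) (by omega)
      have hl : (r n).leadingCoeff ≠ 0 := leadingCoeff_ne_zero.mpr (hrne n)
      have hs : (∏ j ∈ Finset.Icc 1 n, (X - C (a j))) ∣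
          ∏ j ∈ Finset.Icc 1 (n + k), (X - C (a j)) :=
        Finset.prod_dvd_prod_of_subset _ _ _ (Finset.Icc_subset_Icc_right (by omega))
      obtain ⟨s, hs⟩ := hs
      refine ⟨C ((r (n + k)).leadingCoeff / (r n).leadingCoeff) * s, ?_⟩
      have : C (r (n + k)).leadingCoeff = C (r n).leadingCoeff *
          C ((r (n + k)).leadingCoeff / (r n).leadingCoeff) := by
        rw [← C_mul]; congr 1; field_simp
      generalize (r (n + k)).leadingCoeff / (r n).leadingCoeff = q at this ⊢
      rw [this, hs] at h2
      calc r (n + k) = _ := h2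
        _ = (C (r n).leadingCoeff * ∏ j ∈ Finset.Icc 1 n, (X - C (a j))) * (C q * s) := by ring
        _ = _ := by rw [← h1]
  choose S hS using hdiv
  have hSdeg : ∀ k, (S k).degree = (k : ℕ) := by
    intro k
    have h := congrArg natDegree (hS k)
    have hne : S k ≠ 0 := fun h0 => hrne (n + k) (by rw [hS k, h0, mul_zero])
    rw [natDegree_mul (hrne n) hne, hrnat, hrnat] at h
    rw [degree_eq_natDegree hne]
    exact_mod_cast (by omega : (S k).natDegree = k)
  have hGj : ∀ j : Fin n, ∃ c : ℕ → ℝ,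
      ∑ k ∈ Finset.range m, B j (n + k) • S k = ∑ i ∈ Finset.range m, c i • p i := by
    intro j
    refine expand p hpd m _ ?_
    refine (degree_lt_iff_coeff_zero _ _).mpr fun d hd => ?_
    rw [finsetSum_coeff]
    refine Finset.sum_eq_zero fun k hk => ?_
    rw [coeff_smul, coeff_eq_zero_of_degree_lt, smul_zero]
    rw [hSdeg]
    have := Finset.mem_range.mp hk
    exact_mod_cast (by omega : k < d)
  choose G hGj using hGj
  have hPj : ∀ j : Fin n, p (m + j) = ∑ k : Fin m, G j k • (r n * p k) +
      ∑ i : Fin n, B j i • r i := by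
    intro j
    rw [hB j, Finset.sum_range_add, add_comm]
    congr 1
    · have : ∀ k ∈ Finset.range m, B j (n + k) • r (n + k) = r n * (B j (n + k) • S k) := by
        intro k _
        rw [hS k, mul_smul_comm]
      rw [Finset.sum_congr rfl this, ← Finset.mul_sum, hGj j, Finset.mul_sum,
        ← Fin.sum_univ_eq_sum_range (fun k => r n * G j k • p k)]
      simp_rw [mul_smul_comm]
    · rw [← Fin.sum_univ_eq_sum_range (fun k => B j k • r k)]
  -- the three families
  let Pf : Fin m ⊕ Fin n → ℝ[X] := fun s => p (finSumFinEquiv s : Fin (m + n))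
  let Qf : Fin m ⊕ Fin n → ℝ[X] := Sum.elim (fun k => r n * p k) (fun i => r i)
  let Rf : Fin m ⊕ Fin n → ℝ[X] := Sum.elim (fun k => r n * p k) (fun j => p (m + j))
  have hRQ : cm Rf = cm Qf * Matrix.fromBlocks 1 (Matrix.of fun (k : Fin m) (j : Fin n) => G j k) 0
      (Matrix.of fun i j : Fin n => B j i) := by
    refine cm_mul _ _ _ ?_
    rintro (k | j)
    · simp [Rf, Qf, Matrix.one_apply, ite_smul]
    · simp [Rf, Qf, hPj j]
  have hRP : cm Rf = cm Pf * Matrix.fromBlocks (Matrix.of fun i k : Fin m => A k i) 0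
      (Matrix.of fun (i : Fin n) (k : Fin m) => A k (m + i)) 1 := by
    refine cm_mul _ _ _ ?_
    rintro (k | j)
    · simp only [Rf, Pf, Sum.elim_inl, hA k, Fintype.sum_sum_type, Matrix.fromBlocks_apply₁₁,
        Matrix.fromBlocks_apply₂₁, Matrix.of_apply, finSumFinEquiv_apply_left,
        finSumFinEquiv_apply_right, Fin.val_castAdd, Fin.val_natAdd]
      rw [Finset.sum_range_add, ← Fin.sum_univ_eq_sum_range (fun i => A k i • p i),
        ← Fin.sum_univ_eq_sum_range (fun i => A k (m + i) • p (m + i))]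
    · simp [Rf, Pf, Matrix.one_apply, ite_smul]
  have hdP : (cm Pf).det = 1 := by
    rw [show cm Pf = cm (fun s => p (finSumFinEquiv s : Fin (m + n))) from rfl,
      det_cm_nat p hpdeg]
    exact Finset.prod_eq_one fun i _ => hmonic i
  have hdQ : (cm Qf).det = (-1) ^ (m * n) * ((r n).leadingCoeff ^ m *
      ∏ j ∈ Finset.range n, (r j).leadingCoeff) := by
    obtain ⟨π, hπ, hl, hr⟩ := exists_perm m n hm
    let h : ℕ → ℝ[X] := fun d => if d < n then r d else r n * p (d - n)
    have hh : ∀ d, (h d).natDegree = d := by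
      intro d
      by_cases hd : d < n
      · simp [h, hd, hrnat]
      · simp only [h, hd, if_false]
        rw [natDegree_mul (hrne n) (hpne _), hrnat, hpdeg]
        omega
    have : cm Qf = (cm (m := m) (n := n)
        fun s => h (finSumFinEquiv s : Fin (m + n))).submatrix id π := by
      ext d s
      simp only [cm, Matrix.of_apply, Matrix.submatrix_apply, id]
      rcases s with k | i
      · rw [hl]; simp [Qf, h]
      · rw [hr]; simp [Qf, h]
    rw [this, Matrix.det_permute', hπ, det_cm_nat h hh, add_comm m n, Finset.prod_range_add,
      mul_comm ((r n).leadingCoeff ^ m)]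
    congr 2
    · refine Finset.prod_congr rfl fun i hi => ?_
      simp [h, Finset.mem_range.mp hi]
    · rw [Finset.prod_congr rfl (g := fun _ => (r n).leadingCoeff)]
      · simp
      · intro k _
        simp [h, leadingCoeff_mul, (hmonic k).leadingCoeff]
  have key := congrArg Matrix.det (hRP.symm.trans hRQ)
  rw [Matrix.det_mul, Matrix.det_mul, hdP, hdQ, Matrix.det_fromBlocks_zero₁₂,
    Matrix.det_fromBlocks_zero₂₁, Matrix.det_one, Matrix.det_one, mul_one, one_mul, one_mul] at key
  rw [hG, key]
  simp_rw [hBT]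
  ring
end

section
/- For every real number x and all natural numbers n, i, g with i \le g \le n+i: \binom{g}{i} \binom{-x+i}{n+i-g} = \sum_{j=0}^{\min(n,g)} \binom{j}{i+j-g} \binom{g}{g-j} \binom{-x}{n-j}, where for integers a \ge 0 and b, \binom{a}{b} denotes the ordinary binomial coefficient with the convention \binom{a}{b} = 0 when b < 0 or b > a, and \binom{-x+i}{n+i-g}, \binom{-x}{n-j} are generalized binomial coefficients. -/
/-- The generalized binomial coefficient `x choose l = x(x-1)⋯(x-l+1)/l!`. -/
noncomputable def gbinom (x : ℝ) (l : ℕ) : ℝ :=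
  (∏ k ∈ Finset.range l, (x - k)) / l.factorial

/-- The ordinary binomial coefficient with a possibly negative lower index
(equal to `0` when the lower index is negative). -/
def ichoose (a : ℕ) (b : ℤ) : ℕ := if 0 ≤ b then a.choose b.toNat else 0

theorem gbinom_eq_ring_choose (x : ℝ) (l : ℕ) : gbinom x l = Ring.choose x l := by
  rw [Ring.choose_eq_smul, gbinom, ← Polynomial.aeval_eq_smeval, Polynomial.aeval_def,
    Polynomial.eval₂_eq_eval_map, descPochhammer_map,
    descPochhammer_eval_eq_prod_range, smul_eq_mul, div_eq_inv_mul]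

theorem gbinom_vandermonde (x : ℝ) (i N : ℕ) :
    gbinom (x + i) N = ∑ k ∈ Finset.range (min N i + 1), (i.choose k : ℝ) * gbinom x (N - k) := by
  rw [gbinom_eq_ring_choose, add_comm, Ring.add_choose_eq N (Commute.all _ _),
    Finset.Nat.sum_antidiagonal_eq_sum_range_succ_mk]
  simp only [Ring.choose_natCast, gbinom_eq_ring_choose]
  symm
  apply Finset.sum_subset
  · intro k hk
    simp only [Finset.mem_range] at *
    omega
  · intro k hk hk'
    simp only [Finset.mem_range] at *
    rw [Nat.choose_eq_zero_of_lt (by omega)]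
    simp

theorem gbinom_identity_two (x : ℝ) (n i g : ℕ) (h1 : i ≤ g) (h2 : g ≤ n + i) :
    (g.choose i : ℝ) * gbinom (-x + i) (n + i - g)
    = ∑ j ∈ Finset.range (min n g + 1),
        (ichoose j ((i : ℤ) + j - g) : ℝ) * (g.choose (g - j) : ℝ) *
          gbinom (-x) (n - j) := by
  obtain ⟨d, rfl⟩ := Nat.exists_eq_add_of_le h1
  obtain ⟨N, rfl⟩ : ∃ N, n = d + N := Nat.exists_eq_add_of_le (by omega)
  rw [show min (d + N) (i + d) + 1 = d + (min N i + 1) by omega, Finset.sum_range_add,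
    Finset.sum_eq_zero, zero_add, show d + N + i - (i + d) = N by omega, gbinom_vandermonde,
    Finset.mul_sum]
  · apply Finset.sum_congr rfl
    intro k hk
    simp only [Finset.mem_range] at hk
    rw [show d + N - (d + k) = N - k by omega, ← mul_assoc]
    congr 1
    have hz : (i : ℤ) + ((d + k : ℕ) : ℤ) - ((i + d : ℕ) : ℤ) = (k : ℤ) := by push_cast; ring
    rw [hz, ichoose, if_pos (by omega), Int.toNat_natCast]
    have hm := Nat.choose_mul (n := i + d) (k := d + k) (s := d) (by omega)
    rw [Nat.choose_symm (by omega), ← Nat.choose_symm_add (a := d) (b := k)]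
    rw [show i + d - d = i by omega, show d + k - d = k by omega,
      ← Nat.choose_symm_add (a := i) (b := d)] at hm
    rw [mul_comm ((d + k).choose d : ℝ)]
    exact_mod_cast hm.symm
  · intro j hj
    simp only [Finset.mem_range] at hj
    rw [ichoose, if_neg (by push_cast; omega)]
    simp
end

section
/- For all real numbers x, u and all natural numbers n, i, g with 0 \le g \le n: \binom{g+i}{i} \binom{x+u+n+i-1}{n-g} (x-i)_{n-g} = \sum_{j=g}^{n} (-1)^{j-g} (u+g+i)_{j-g} \, (x)_{n-j} \, \binom{j}{j-g} \binom{g+i}{j} \binom{x+u+n-1}{n-j}, where \binom{g+i}{i}, \binom{j}{j-g}, \binom{g+i}{j} are ordinary binomial coefficients (equal to 0 when the lower index exceeds the upper index) and the binomial coefficients with real upper argument are generalized binomial coefficients. -/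
/-- The Pochhammer symbol `(y)_l = y (y+1) ⋯ (y+l-1)`. -/
noncomputable def poch (y : ℝ) (l : ℕ) : ℝ := ∏ k ∈ Finset.range l, (y + k)

theorem poch_succ (y : ℝ) (l : ℕ) : poch y (l+1) = poch y l * (y + l) := by
  simp [poch, Finset.prod_range_succ]

theorem poch_succ' (y : ℝ) (l : ℕ) : poch y (l+1) = y * poch (y + 1) l := by
  simp only [poch, Finset.prod_range_succ']
  rw [mul_comm]
  congr 1
  · simp
  · apply Finset.prod_congr rfl
    intros; push_cast; ring

theorem poch_zero (y : ℝ) : poch y 0 = 1 := by simp [poch]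

theorem gbinom_eq (y z : ℝ) (l : ℕ) (h : z = y - l + 1) :
    gbinom y l = poch z l / l.factorial := by
  unfold gbinom poch
  congr 1
  rw [← Finset.prod_range_reflect]
  apply Finset.prod_congr rfl
  intro k hk
  have hk' := Finset.mem_range.1 hk
  have : ((l - 1 - k : ℕ) : ℝ) = l - 1 - k := by
    rw [Nat.sub_sub, Nat.cast_sub (by omega)]; push_cast; ring
  rw [this, h]; ring

noncomputable def TT (x B c : ℝ) (m k : ℕ) : ℝ :=
  (-1) ^ k * (m.descFactorial k : ℝ) * poch B k * poch x (m - k) * poch (c + k) (m - k)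

theorem TT_rec (x B c : ℝ) (m k : ℕ) (h : k ≤ m) :
    TT x B (c - 1) (m + 1) k + TT x B (c - 1) (m + 1) (k + 1)
      = TT x B c (m + 1) k - (m + 1) * (x + B + m) * TT x B c m k := by
  obtain ⟨l, rfl⟩ := Nat.exists_eq_add_of_le h
  unfold TT
  have e1 : k + l + 1 - k = l + 1 := by omega
  have e2 : k + l + 1 - (k + 1) = l := by omega
  have e3 : k + l - k = l := by omega
  have d1 := Nat.succ_descFactorial (k + l) k
  rw [e1] at d1
  have d1' : ((l : ℝ) + 1) * ((k + l + 1).descFactorial k : ℝ)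
      = (k + l + 1) * ((k + l).descFactorial k : ℝ) := by exact_mod_cast d1
  rw [e1, e2, e3, Nat.succ_descFactorial_succ, poch_succ' (c - 1 + k), poch_succ (c + k),
    poch_succ x, poch_succ B]
  have a1 : c - 1 + k + 1 = c + k := by ring
  have a2 : c - 1 + ((k + 1 : ℕ) : ℝ) = c + k := by push_cast; ring
  rw [a1, a2]
  push_cast
  rw [pow_succ]
  linear_combination (-(-1 : ℝ) ^ k * poch B k * poch x l * (x + l) * poch (c + k) l) * d1'

theorem saal (x B : ℝ) (i : ℕ) : ∀ m : ℕ,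
    ∑ k ∈ Finset.range (m + 1), (i.choose k : ℝ) * TT x B (x + B - i) m k
      = poch (x + B) m * poch (x - i) m := by
  induction i with
  | zero =>
    intro m
    rw [Finset.sum_range_succ']
    simp [TT, poch_zero]
    ring
  | succ i ih =>
    intro m
    cases m with
    | zero => simp [TT, poch_zero]
    | succ m =>
      have ec : x + B - ((i + 1 : ℕ) : ℝ) = (x + B - i) - 1 := by push_cast; ring
      rw [ec]
      set c := x + B - (i : ℝ) with hc
      have h1 : ∑ k ∈ Finset.range (m + 1 + 1), ((i + 1).choose k : ℝ) * TT x B (c - 1) (m + 1) k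
          = ∑ k ∈ Finset.range (m + 1 + 1), (i.choose k : ℝ) * TT x B (c - 1) (m + 1) k
          + ∑ k ∈ Finset.range (m + 1), (i.choose k : ℝ) * TT x B (c - 1) (m + 1) (k + 1) := by
        rw [Finset.sum_range_succ', Finset.sum_range_succ' _ (m + 1)]
        simp only [Nat.choose_succ_succ', Nat.cast_add, add_mul, Finset.sum_add_distrib,
          Nat.choose_zero_right]
        ring
      have h2 : TT x B (c - 1) (m + 1) (m + 1) = TT x B c (m + 1) (m + 1) := by
        simp [TT, poch_zero]
      have h3 := ih (m + 1)
      have h4 := ih m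
      rw [Finset.sum_range_succ] at h3
      rw [h1, Finset.sum_range_succ, h2]
      have h5 : ∑ k ∈ Finset.range (m + 1), (i.choose k : ℝ) * TT x B (c - 1) (m + 1) k
          + ∑ k ∈ Finset.range (m + 1), (i.choose k : ℝ) * TT x B (c - 1) (m + 1) (k + 1)
          = ∑ k ∈ Finset.range (m + 1), (i.choose k : ℝ) * TT x B c (m + 1) k
          - (m + 1) * (x + B + m) *
            ∑ k ∈ Finset.range (m + 1), (i.choose k : ℝ) * TT x B c m k := by
        rw [← Finset.sum_add_distrib, Finset.mul_sum, ← Finset.sum_sub_distrib]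
        apply Finset.sum_congr rfl
        intro k hk
        have := TT_rec x B c m k (by have := Finset.mem_range.1 hk; omega)
        linear_combination (i.choose k : ℝ) * this
      have a1 : x - ((i + 1 : ℕ) : ℝ) + 1 = x - i := by push_cast; ring
      rw [poch_succ' (x - ((i + 1 : ℕ) : ℝ)), a1]
      rw [poch_succ, poch_succ (x - i)] at h3
      rw [poch_succ]
      push_cast
      linear_combination h5 + h3 - (m + 1) * (x + B + m) * h4

/-- the combinatorial identity
`C(g+i,i) C(x+u+n+i-1, n-g) (x-i)_{n-g}
  = ∑_{j=g}^{n} (-1)^{j-g} (u+g+i)_{j-g} (x)_{n-j} C(j,j-g) C(g+i,j) C(x+u+n-1, n-j)`. -/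
theorem gbinom_identity_three (x u : ℝ) (n i g : ℕ) (hg : g ≤ n) :
    ((g + i).choose i : ℝ) * gbinom (x + u + n + i - 1) (n - g) * poch (x - i) (n - g)
    = ∑ j ∈ Finset.Icc g n,
        (-1 : ℝ) ^ (j - g) * poch (u + g + i) (j - g) * poch x (n - j) *
          (j.choose (j - g) : ℝ) * ((g + i).choose j : ℝ) *
          gbinom (x + u + n - 1) (n - j) := by
  obtain ⟨m, rfl⟩ := Nat.exists_eq_add_of_le hg
  have e : g + m - g = m := by omega
  rw [← Finset.Ico_add_one_right_eq_Icc, Finset.sum_Ico_eq_sum_range]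
  have e' : g + m + 1 - g = m + 1 := by omega
  rw [e, e', gbinom_eq _ (x + (u + g + i)) m (by push_cast; ring)]
  have key := saal x (u + g + i) i m
  have hm : (m.factorial : ℝ) ≠ 0 := by exact_mod_cast m.factorial_ne_zero
  trans ((g + i).choose i : ℝ) / m.factorial * (poch (x + (u + g + i)) m * poch (x - i) m)
  · ring
  rw [← key, Finset.mul_sum]
  apply Finset.sum_congr rfl
  intro k hk
  have hk' : k ≤ m := by have := Finset.mem_range.1 hk; omega
  have e1 : g + k - g = k := by omega
  have e2 : g + m - (g + k) = m - k := by omega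
  rw [e1, e2, gbinom_eq _ (x + (u + g + i) - i + k) (m - k)
    (by rw [Nat.cast_sub hk']; push_cast; ring)]
  have hf : (((m - k).factorial : ℕ) : ℝ) * (m.descFactorial k : ℝ) = m.factorial := by
    exact_mod_cast Nat.factorial_mul_descFactorial hk'
  have hmk : ((m - k).factorial : ℝ) ≠ 0 := by exact_mod_cast (m - k).factorial_ne_zero
  have hc : ((g + k).choose k : ℝ) * ((g + i).choose (g + k) : ℝ)
      = (g + i).choose i * i.choose k := by
    by_cases hki : k ≤ i
    · have := Nat.choose_mul (n := g + i) (k := g + k) (s := g) (by omega)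
      have f1 : g + i - g = i := by omega
      rw [f1, e1, Nat.choose_symm_add, Nat.choose_symm_add] at this
      rw [mul_comm]
      exact_mod_cast this
    · rw [Nat.choose_eq_zero_of_lt (show g + i < g + k by omega),
        Nat.choose_eq_zero_of_lt (show i < k by omega)]
      simp
  unfold TT
  rw [← hf]
  have hd : (m.descFactorial k : ℝ) ≠ 0 := by
    intro h0; rw [h0, mul_zero] at hf; exact hm hf.symm
  field_simp
  linear_combination (-(poch (u + g + i) k * poch x (m - k) *
    poch (x + (u + g + i) - i + k) (m - k))) * hc
end

section
/- Let \mu be a positive Borel measure on \mathbb{R} for which every polynomial is integrable, let m \ge 1 be an integer, let (\psi_j)_{j\ge 0} be polynomials with deg \psi_j = j and leading coefficient \upsilon_j, and let s(x_1, \dots, x_m) be a symmetric polynomial in m variables. Then: \int_{\mathbb{R}^m} s(x) \, \Lambda(x) \prod_{j=1}^m \psi_{j-1}(x_j) \; d\mu(x_1)\cdots d\mu(x_m) = \frac{(-1)^{\binom{m}{2}} \prod_{j=0}^{m-1} \upsilon_j}{m!} \int_{\mathbb{R}^m} s(x) \, \Lambda^2(x) \; d\mu(x_1)\cdots d\mu(x_m).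 -/
open MeasureTheory Polynomial

lemma vs_integrable (μ : Measure ℝ) [SigmaFinite μ]
    (hint : ∀ f : Polynomial ℝ, Integrable (fun x => f.eval x) μ)
    (m : ℕ) (P : MvPolynomial (Fin m) ℝ) :
    Integrable (fun x : Fin m → ℝ => MvPolynomial.eval x P) (Measure.pi fun _ => μ) := by
  simp_rw [MvPolynomial.eval_eq']
  refine integrable_finset_sum _ fun d _ => Integrable.const_mul ?_ _
  refine Integrable.fintype_prod (f := fun (i : Fin m) (x : ℝ) => x ^ d i) fun i => ?_
  simpa using hint (X ^ d i)

lemma vs_sign (m : ℕ) (x : Fin m → ℝ) :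
    (Matrix.vandermonde x).det =
      (-1 : ℝ) ^ m.choose 2 * ∏ i : Fin m, ∏ j ∈ Finset.Ioi i, (x i - x j) := by
  rw [Matrix.det_vandermonde]
  have h : ∀ i : Fin m, ∏ j ∈ Finset.Ioi i, (x j - x i) =
      (-1 : ℝ) ^ (m - 1 - (i : ℕ)) * ∏ j ∈ Finset.Ioi i, (x i - x j) := by
    intro i
    rw [← Fin.card_Ioi, ← Finset.prod_const, ← Finset.prod_mul_distrib]
    exact Finset.prod_congr rfl fun j _ => by ring
  simp_rw [h]
  rw [Finset.prod_mul_distrib, Finset.prod_pow_eq_pow_sum]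
  congr 2
  rw [Fin.sum_univ_eq_sum_range (fun i => m - 1 - i) m, Finset.sum_range_reflect (fun i => i) m,
    Finset.sum_range_id, Nat.choose_two_right]

lemma vs_perm (m : ℕ) (x : Fin m → ℝ) (σ : Equiv.Perm (Fin m)) :
    (∏ i : Fin m, ∏ j ∈ Finset.Ioi i, (x (σ i) - x (σ j))) =
      ((Equiv.Perm.sign σ : ℤ) : ℝ) * ∏ i : Fin m, ∏ j ∈ Finset.Ioi i, (x i - x j) := by
  have h1 := vs_sign m (fun i => x (σ i))
  have h2 := vs_sign m x
  have h3 := Matrix.det_permute σ (Matrix.vandermonde x)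
  have h4 : (Matrix.vandermonde (fun i => x (σ i))) =
    (Matrix.vandermonde x).submatrix σ id := rfl
  rw [h4, h3, h2] at h1
  have h5 : (-1 : ℝ) ^ m.choose 2 ≠ 0 := by positivity
  apply mul_left_cancel₀ h5
  rw [← h1]; ring

lemma vs_det (m : ℕ) (x : Fin m → ℝ)
    (ψ : ℕ → Polynomial ℝ) (hψ : ∀ j : ℕ, (ψ j).degree = (j : ℕ)) :
    (Matrix.of (fun i j : Fin m => (ψ j).eval (x i))).det =
      (Matrix.vandermonde x).det * ∏ j ∈ Finset.range m, (ψ j).leadingCoeff := by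
  have hn : ∀ j, (ψ j).natDegree = j := fun j => natDegree_eq_of_degree_eq_some (hψ j)
  rw [Matrix.eval_matrixOfPolynomials_eq_vandermonde_mul_matrixOfPolynomials x
    (fun j : Fin m => ψ j) (fun i => (hn i).le), Matrix.det_mul]
  congr 1
  rw [Matrix.det_of_upperTriangular, ← Fin.prod_univ_eq_prod_range
    (fun j => (ψ j).leadingCoeff) m]
  · refine Finset.prod_congr rfl fun j _ => ?_
    simp [leadingCoeff, hn]
  · intro i j hij
    simp only [Matrix.of_apply]
    apply coeff_eq_zero_of_natDegree_lt
    rw [hn]; exact hij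

/-- the symmetrization lemma turning one Vandermonde factor
into a squared Vandermonde factor in a multiple integral. -/
theorem vandermonde_symmetrization
    (μ : Measure ℝ) [SigmaFinite μ]
    (hint : ∀ f : Polynomial ℝ, Integrable (fun x => f.eval x) μ)
    (m : ℕ) (hm : 1 ≤ m)
    (ψ : ℕ → Polynomial ℝ) (hψ : ∀ j : ℕ, (ψ j).degree = (j : ℕ))
    (s : MvPolynomial (Fin m) ℝ) (hs : s.IsSymmetric) :
    (∫ x : Fin m → ℝ,
      MvPolynomial.eval x s *
        (∏ i : Fin m, ∏ j ∈ Finset.Ioi i, (x i - x j)) *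
        ∏ j : Fin m, (ψ (j : ℕ)).eval (x j)
      ∂(Measure.pi fun _ => μ))
    = ((-1 : ℝ) ^ m.choose 2 * ∏ j ∈ Finset.range m, (ψ j).leadingCoeff) /
        m.factorial *
      ∫ x : Fin m → ℝ,
        MvPolynomial.eval x s *
          (∏ i : Fin m, ∏ j ∈ Finset.Ioi i, (x i - x j)) ^ 2
        ∂(Measure.pi fun _ => μ) := by
  set F : (Fin m → ℝ) → ℝ := fun x => MvPolynomial.eval x s *
        (∏ i : Fin m, ∏ j ∈ Finset.Ioi i, (x i - x j)) *
        ∏ j : Fin m, (ψ (j : ℕ)).eval (x j) with hF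
  have hFi : Integrable F (Measure.pi fun _ => μ) := by
    have := vs_integrable μ hint m (s * (∏ i : Fin m, ∏ j ∈ Finset.Ioi i,
      (MvPolynomial.X i - MvPolynomial.X j)) *
      ∏ j : Fin m, (ψ (j : ℕ)).eval₂ MvPolynomial.C (MvPolynomial.X j))
    refine this.congr (Filter.Eventually.of_forall fun x => ?_)
    simp only [hF, map_mul, map_prod, map_sub, MvPolynomial.eval_X]
    congr 1
    refine Finset.prod_congr rfl fun j _ => ?_
    rw [Polynomial.hom_eval₂]
    have : (MvPolynomial.eval x).comp MvPolynomial.C = RingHom.id ℝ := by ext; simp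
    rw [this, MvPolynomial.eval_X]; rfl
  have hmp : ∀ σ : Equiv.Perm (Fin m), MeasurePreserving
      (MeasurableEquiv.piCongrLeft (fun _ : Fin m => ℝ) σ.symm)
      (Measure.pi fun _ => μ) (Measure.pi fun _ => μ) := fun σ =>
    measurePreserving_piCongrLeft (fun _ => μ) σ.symm
  have hap : ∀ (σ : Equiv.Perm (Fin m)) (x : Fin m → ℝ),
      MeasurableEquiv.piCongrLeft (fun _ : Fin m => ℝ) σ.symm x = fun i => x (σ i) := by
    intro σ x
    ext i
    obtain ⟨k, rfl⟩ := σ.symm.surjective i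
    rw [MeasurableEquiv.coe_piCongrLeft, Equiv.piCongrLeft_apply_apply]
    simp
  have hI : ∀ σ : Equiv.Perm (Fin m), ∫ x, F (fun i => x (σ i)) ∂(Measure.pi fun _ => μ) =
      ∫ x, F x ∂(Measure.pi fun _ => μ) := by
    intro σ
    rw [← (hmp σ).integral_comp' F]
    simp_rw [hap]
  have hIn : ∀ σ : Equiv.Perm (Fin m),
      Integrable (fun x => F (fun i => x (σ i))) (Measure.pi fun _ => μ) := by
    intro σ
    have := (hmp σ).integrable_comp_of_integrable hFi
    refine this.congr (Filter.Eventually.of_forall fun x => ?_)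
    simp only [Function.comp, hap]
  have hsum : ∀ x : Fin m → ℝ, ∑ σ : Equiv.Perm (Fin m), F (fun i => x (σ i)) =
      ((-1 : ℝ) ^ m.choose 2 * ∏ j ∈ Finset.range m, (ψ j).leadingCoeff) *
      (MvPolynomial.eval x s * (∏ i : Fin m, ∏ j ∈ Finset.Ioi i, (x i - x j)) ^ 2) := by
    intro x
    have hd := vs_det m x ψ hψ
    rw [vs_sign, Matrix.det_apply'] at hd
    simp only [Matrix.of_apply] at hd
    have : ∀ σ : Equiv.Perm (Fin m), F (fun i => x (σ i)) =
        (MvPolynomial.eval x s * (∏ i : Fin m, ∏ j ∈ Finset.Ioi i, (x i - x j))) *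
        (((Equiv.Perm.sign σ : ℤ) : ℝ) * ∏ j : Fin m, (ψ (j : ℕ)).eval (x (σ j))) := by
      intro σ
      have h1 : MvPolynomial.eval (fun i => x (σ i)) s = MvPolynomial.eval x s := by
        conv_rhs => rw [← hs σ]
        rw [MvPolynomial.eval_rename]; rfl
      simp only [hF]
      rw [vs_perm, h1]; ring
    simp_rw [this]
    rw [← Finset.mul_sum, hd]; ring
  have hfin : (m.factorial : ℝ) * ∫ x, F x ∂(Measure.pi fun _ => μ) =
      ((-1 : ℝ) ^ m.choose 2 * ∏ j ∈ Finset.range m, (ψ j).leadingCoeff) *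
      ∫ x : Fin m → ℝ, MvPolynomial.eval x s *
          (∏ i : Fin m, ∏ j ∈ Finset.Ioi i, (x i - x j)) ^ 2 ∂(Measure.pi fun _ => μ) := by
    conv_rhs => rw [← integral_const_mul]
    rw [← integral_congr_ae (Filter.Eventually.of_forall hsum)]
    rw [integral_finset_sum _ fun σ _ => hIn σ]
    rw [Finset.sum_congr rfl fun σ _ => hI σ]
    simp [Fintype.card_perm]
  have hm0 : (m.factorial : ℝ) ≠ 0 := by positivity
  rw [div_mul_eq_mul_div, ← hfin]
  field_simp
end
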